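/- arXiv:1911.08951 — 10 statements merged into one kernel-verified Lean document; each statement's English description precedes it below -/
import Mathlib

section
/- If a group G admits a right-invariant finitely additive probability measure and H is a subgroup of G, then H admits a right-invariant finitely additive probability measure. -/
/-- A right-invariant finitely additive probability measure on a group `G`. -/
def IsRightInvariantFAPM {G : Type*} [Group G] (μ : Set G → ℝ) : Prop :=
  (∀ X : Set G, 0 ≤ μ X ∧ μ X ≤ 1) ∧
  μ Set.univ = 1 ∧
  (∀ X Y : Set G, Disjoint X Y → μ (X ∪ Y) = μ X + μ Y) ∧
  ∀ (X : Set G) (g : G), μ ((· * g) '' X) = μ X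

/-!
Choose a set `S` of representatives of the left cosets `gH`. Writing `g = s * h` with `s ∈ S` and
`h ∈ H`, the map `g ↦ h` commutes with right multiplication by elements of `H`, so it pushes a
right-invariant measure on `G` forward to one on `H`.
-/

theorem preimage_image_of_semiconj {α β : Type*} {f : α → β} {ga : α → α} {gb : β → β}
    (hf : Function.Semiconj f ga gb) (hga : Function.Surjective ga)
    (hgb : Function.Injective gb) (s : Set β) : f ⁻¹' (gb '' s) = ga '' (f ⁻¹' s) := by
  rw [← hga.image_preimage (f ⁻¹' (gb '' s)), ← Set.preimage_comp, hf.comp_eq, Set.preimage_comp,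
    hgb.preimage_image]

theorem IsRightInvariantFAPM.map {G K : Type*} [Group G] [Group K] {μ : Set G → ℝ}
    (hμ : IsRightInvariantFAPM μ) {f : G → K}
    (hf : ∀ k : K, ∃ g : G, Function.Semiconj f (· * g) (· * k)) :
    IsRightInvariantFAPM fun X : Set K ↦ μ (f ⁻¹' X) := by
  obtain ⟨mem_Icc, univ_eq_one, additive, invariant⟩ := hμ
  refine ⟨fun X ↦ mem_Icc (f ⁻¹' X), univ_eq_one,
    fun X Y hXY ↦ additive _ _ (hXY.preimage f), fun X k ↦ ?_⟩
  obtain ⟨g, hg⟩ := hf k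
  calc
    μ (f ⁻¹' ((· * k) '' X)) = μ ((· * g) '' (f ⁻¹' X)) := by
      rw [preimage_image_of_semiconj hg (mul_right_surjective g) (mul_left_injective k)]
    _ = μ (f ⁻¹' X) := invariant _ g

theorem exists_forall_semiconj_mul_right {G : Type*} [Group G] (H : Subgroup G) :
    ∃ f : G → H, ∀ h : H, Function.Semiconj f (· * (h : G)) (· * h) := by
  obtain ⟨S, hS, -⟩ := H.exists_isComplement_left 1
  exact ⟨fun g ↦ (hS.equiv g).2, fun h g ↦ congrArg Prod.snd (hS.equiv_mul_right g h)⟩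

/-- If `G` admits a right-invariant finitely additive probability measure and `H ≤ G`,
then `H` admits a right-invariant finitely additive probability measure. -/
theorem subgroup_amenable_of_amenable {G : Type*} [Group G]
    (hG : ∃ μ : Set G → ℝ, IsRightInvariantFAPM μ) (H : Subgroup G) :
    ∃ ν : Set H → ℝ, IsRightInvariantFAPM ν := by
  obtain ⟨μ, hμ⟩ := hG
  obtain ⟨f, hf⟩ := exists_forall_semiconj_mul_right H
  exact ⟨fun X ↦ μ (f ⁻¹' X), hμ.map fun h ↦ ⟨h, hf h⟩⟩
end

section
/- Let N be a normal subgroup of a group G. If both N and the quotient group G/N admit right-invariant finitely additive probability measures, then G admits a right-invariant finitely additive probability measure. -/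
/-!
A finitely additive probability measure extends uniquely to a norm-one functional on bounded
functions, so such measures can be pushed forward and averaged over one another like ordinary
ones. Let `μ` on `N` and `ν` on `G ⧸ N` be right-invariant. The push-forward of `μ` along
`n ↦ n * g` depends only on the coset of `g`; averaging these push-forwards against `ν` gives a
measure on `G`. Right translation by `g` permutes them as it permutes the cosets, so the average
is invariant because `ν` is.
-/

open scoped lp ENNReal

section BoundedFunctions

variable {α β : Type*}

lemma abs_apply_le_lpInfty_norm (f : ℓ^∞(α, ℝ)) (x : α) : |f x| ≤ ‖f‖ :=
  lp.norm_apply_le_norm ENNReal.top_ne_zero f x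

/-- The indicator function of a set, as a bounded function. -/
noncomputable def lpInftyIndicator (A : Set α) : ℓ^∞(α, ℝ) :=
  ⟨A.indicator 1, memℓp_infty ⟨1, by
    rintro _ ⟨x, rfl⟩
    by_cases hx : x ∈ A <;> simp [hx]⟩⟩

@[simp]
lemma lpInftyIndicator_apply (A : Set α) (x : α) :
    lpInftyIndicator A x = A.indicator 1 x := rfl

lemma lpInftyIndicator_univ : lpInftyIndicator (Set.univ : Set α) = 1 := by
  ext x
  simp

/-- Precomposition with a map, as an operator between spaces of bounded functions. -/
noncomputable def lpInftyComp (φ : α → β) : ℓ^∞(β, ℝ) →L[ℝ] ℓ^∞(α, ℝ) :=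
  LinearMap.mkContinuous
    { toFun := fun f => ⟨f ∘ φ, memℓp_infty <|
        (memℓp_infty_iff.1 f.2).mono (Set.range_comp_subset_range φ fun b => ‖f b‖)⟩
      map_add' := fun _ _ => rfl
      map_smul' := fun _ _ => rfl }
    1 fun f => by
      rw [one_mul]
      exact lp.norm_le_of_forall_le (norm_nonneg f) fun a =>
        abs_apply_le_lpInfty_norm f (φ a)

lemma lpInftyComp_indicator (φ : α → β) (A : Set β) :
    lpInftyComp φ (lpInftyIndicator A) = lpInftyIndicator (φ ⁻¹' A) := rfl

lemma norm_sub_step_le (f : ℓ^∞(α, ℝ)) :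
    ‖f - (‖f‖ • lpInftyIndicator {x | 0 ≤ f x} - (‖f‖ / 2) • 1)‖ ≤ ‖f‖ / 2 := by
  refine lp.norm_le_of_forall_le (by positivity) fun x => ?_
  obtain ⟨hlower, hupper⟩ := abs_le.1 (abs_apply_le_lpInfty_norm f x)
  change |f x - (‖f‖ * Set.indicator {x | 0 ≤ f x} 1 x - ‖f‖ / 2 * 1)| ≤ ‖f‖ / 2
  rw [abs_le]
  obtain hx | hx := le_or_gt 0 (f x)
  · rw [Set.indicator_of_mem (show x ∈ {x | 0 ≤ f x} from hx), Pi.one_apply]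
    constructor <;> linarith
  · rw [Set.indicator_of_notMem (show x ∉ {x | 0 ≤ f x} from hx.not_ge)]
    constructor <;> linarith

-- A bounded function lies within half its norm of the span; by Riesz's lemma this cannot happen
-- for a proper closed subspace.
lemma dense_span_lpInftyIndicator :
    Dense (Submodule.span ℝ (Set.range (lpInftyIndicator (α := α))) : Set ℓ^∞(α, ℝ)) := by
  set S := Submodule.span ℝ (Set.range (lpInftyIndicator (α := α)))
  have indicator_mem (A : Set α) : lpInftyIndicator A ∈ S := Submodule.subset_span ⟨A, rfl⟩
  rw [Submodule.dense_iff_topologicalClosure_eq_top]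
  by_contra hproper
  obtain ⟨f, hf, hfar⟩ := riesz_lemma S.isClosed_topologicalClosure
    (SetLike.exists_not_mem_of_ne_top _ hproper) (show (3 / 4 : ℝ) < 1 by norm_num)
  have step_mem : ‖f‖ • lpInftyIndicator {x | 0 ≤ f x} - (‖f‖ / 2) • 1 ∈ S :=
    S.sub_mem (S.smul_mem _ (indicator_mem _))
      (S.smul_mem _ (lpInftyIndicator_univ (α := α) ▸ indicator_mem _))
  have hnorm : ‖f‖ ≤ 0 := by
    linarith [hfar _ (S.le_topologicalClosure step_mem), norm_sub_step_le f]
  exact hf (norm_le_zero_iff.1 hnorm ▸ zero_mem _)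

lemma denseRange_linearCombination_lpInftyIndicator :
    DenseRange (Finsupp.linearCombination ℝ (lpInftyIndicator (α := α))) := by
  rw [DenseRange, ← LinearMap.coe_range, Finsupp.range_linearCombination]
  exact dense_span_lpInftyIndicator

lemma linearCombination_lpInftyIndicator_apply (c : Set α →₀ ℝ) (x : α) :
    Finsupp.linearCombination ℝ lpInftyIndicator c x =
      ∑ A ∈ c.support, c A * A.indicator 1 x := by
  rw [Finsupp.linearCombination_apply, Finsupp.sum, lp.coeFn_sum, Finset.sum_apply]
  rfl

end BoundedFunctions

/-- A finitely additive probability measure, defined on all subsets of a type. -/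
@[ext]
structure FinAddProb (α : Type*) where
  toFun : Set α → ℝ
  nonneg : ∀ A, 0 ≤ toFun A
  apply_univ : toFun Set.univ = 1
  apply_union : ∀ A B, Disjoint A B → toFun (A ∪ B) = toFun A + toFun B

namespace FinAddProb

variable {α β γ : Type*}

instance : CoeFun (FinAddProb α) fun _ => Set α → ℝ := ⟨toFun⟩

lemma apply_empty (μ : FinAddProb α) : μ ∅ = 0 := by
  simpa using μ.apply_union ∅ ∅ (Set.disjoint_empty _)

lemma inter_add_diff (μ : FinAddProb α) (A B : Set α) : μ (A ∩ B) + μ (A \ B) = μ A := by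
  rw [← μ.apply_union _ _ Set.disjoint_sdiff_inter.symm, Set.inter_union_sdiff]

lemma apply_le_one (μ : FinAddProb α) (A : Set α) : μ A ≤ 1 := by
  have hsplit := μ.inter_add_diff Set.univ A
  rw [Set.univ_inter, μ.apply_univ] at hsplit
  linarith [μ.nonneg (Set.univ \ A)]

section Integral

-- The localization to `B` lets the induction split `B` along the set being inserted.
lemma sum_mul_inter_le (μ : FinAddProb α) (c : Set α → ℝ) (s : Finset (Set α)) (B : Set α) (C : ℝ)
    (hC : ∀ x ∈ B, ∑ A ∈ s, c A * A.indicator 1 x ≤ C) :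
    ∑ A ∈ s, c A * μ (A ∩ B) ≤ C * μ B := by
  classical
  induction s using Finset.induction_on generalizing B C with
  | empty =>
    obtain rfl | ⟨x, hx⟩ := B.eq_empty_or_nonempty
    · simp [μ.apply_empty]
    · simpa using mul_nonneg (by simpa using hC x hx) (μ.nonneg B)
  | insert D s hD ih =>
    simp only [Finset.sum_insert hD] at hC ⊢
    have hinside := ih (B ∩ D) (C - c D) fun x hx => by
      have := hC x hx.1
      rw [Set.indicator_of_mem hx.2, Pi.one_apply] at this
      linarith
    have houtside := ih (B \ D) C fun x hx => by
      simpa [Set.indicator_of_notMem hx.2] using hC x hx.1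
    have hsum : ∑ A ∈ s, c A * μ (A ∩ B) =
        ∑ A ∈ s, c A * μ (A ∩ (B ∩ D)) + ∑ A ∈ s, c A * μ (A ∩ (B \ D)) := by
      rw [← Finset.sum_add_distrib]
      refine Finset.sum_congr rfl fun A _ => ?_
      rw [← mul_add, ← Set.inter_assoc, ← Set.inter_sdiff_assoc, μ.inter_add_diff]
    rw [hsum, Set.inter_comm D B]
    linear_combination hinside + houtside + C * μ.inter_add_diff B D

lemma linearCombination_le_norm (μ : FinAddProb α) (c : Set α →₀ ℝ) :
    Finsupp.linearCombination ℝ μ c ≤ ‖Finsupp.linearCombination ℝ lpInftyIndicator c‖ := by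
  have hbound (x : α) : ∑ A ∈ c.support, c A * A.indicator 1 x ≤
      ‖Finsupp.linearCombination ℝ lpInftyIndicator c‖ := by
    rw [← linearCombination_lpInftyIndicator_apply]
    exact (le_abs_self _).trans (abs_apply_le_lpInfty_norm _ x)
  simpa [Finsupp.linearCombination_apply, Finsupp.sum, μ.apply_univ] using
    μ.sum_mul_inter_le c c.support Set.univ _ fun x _ => hbound x

lemma norm_linearCombination_le (μ : FinAddProb α) (c : Set α →₀ ℝ) :
    ‖Finsupp.linearCombination ℝ μ c‖ ≤
      1 * ‖Finsupp.linearCombination ℝ lpInftyIndicator c‖ := by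
  rw [one_mul, Real.norm_eq_abs]
  refine abs_le'.2 ⟨μ.linearCombination_le_norm c, ?_⟩
  simpa only [map_neg, norm_neg] using μ.linearCombination_le_norm (-c)

/-- The integral of bounded functions: the continuous linear functional which on the dense
subspace of linear combinations of indicators replaces the indicator of `A` by `μ A`. -/
noncomputable def integral (μ : FinAddProb α) : ℓ^∞(α, ℝ) →L[ℝ] ℝ :=
  (Finsupp.linearCombination ℝ μ).extendOfNorm (Finsupp.linearCombination ℝ lpInftyIndicator)

lemma integral_indicator (μ : FinAddProb α) (A : Set α) :
    μ.integral (lpInftyIndicator A) = μ A := by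
  simpa [integral] using LinearMap.extendOfNorm_eq denseRange_linearCombination_lpInftyIndicator
    ⟨1, μ.norm_linearCombination_le⟩ (Finsupp.single A 1)

lemma integral_one (μ : FinAddProb α) : μ.integral 1 = 1 := by
  rw [← lpInftyIndicator_univ, integral_indicator, μ.apply_univ]

lemma integral_le_norm (μ : FinAddProb α) (f : ℓ^∞(α, ℝ)) : μ.integral f ≤ ‖f‖ := by
  simpa [integral] using (le_abs_self _).trans (LinearMap.norm_extendOfNorm_apply_le
    denseRange_linearCombination_lpInftyIndicator 1 μ.norm_linearCombination_le f)

lemma integral_nonneg (μ : FinAddProb α) {f : ℓ^∞(α, ℝ)} (hf : ∀ x, 0 ≤ f x) :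
    0 ≤ μ.integral f := by
  have hnorm : ‖‖f‖ • 1 - f‖ ≤ ‖f‖ := by
    refine lp.norm_le_of_forall_le (norm_nonneg f) fun x => ?_
    have hupper := (abs_le.1 (abs_apply_le_lpInfty_norm f x)).2
    change |‖f‖ * 1 - f x| ≤ ‖f‖
    rw [abs_le]
    constructor <;> linarith [hf x]
  have hle := (μ.integral_le_norm (‖f‖ • 1 - f)).trans hnorm
  rw [map_sub, map_smul, integral_one, smul_eq_mul, mul_one] at hle
  linarith

end Integral

/-- The push-forward of a finitely additive probability measure. -/
def map (φ : α → β) (μ : FinAddProb α) : FinAddProb β where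
  toFun A := μ (φ ⁻¹' A)
  nonneg _ := μ.nonneg _
  apply_univ := μ.apply_univ
  apply_union _ _ hAB := μ.apply_union _ _ (hAB.preimage φ)

lemma map_map (φ : α → β) (ψ : β → γ) (μ : FinAddProb α) :
    (μ.map φ).map ψ = μ.map (ψ ∘ φ) := rfl

lemma integral_map (φ : α → β) (μ : FinAddProb α) (f : ℓ^∞(β, ℝ)) :
    (μ.map φ).integral f = μ.integral (lpInftyComp φ f) := by
  have integral_eq : (μ.map φ).integral = μ.integral.comp (lpInftyComp φ) := by
    refine ContinuousLinearMap.ext_on dense_span_lpInftyIndicator ?_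
    rintro _ ⟨A, rfl⟩
    rw [ContinuousLinearMap.comp_apply, lpInftyComp_indicator, integral_indicator,
      integral_indicator]
    rfl
  rw [integral_eq, ContinuousLinearMap.comp_apply]

/-- The bounded function `a ↦ κ a A` attached to a family of measures and a set `A`. -/
def massFamily (κ : α → FinAddProb β) (A : Set β) : ℓ^∞(α, ℝ) :=
  ⟨fun a => κ a A, memℓp_infty ⟨1, by
    rintro _ ⟨a, rfl⟩
    exact (Real.norm_of_nonneg ((κ a).nonneg A)).trans_le ((κ a).apply_le_one A)⟩⟩

/-- The average of a family of finitely additive probability measures against another one. -/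
noncomputable def bind (ν : FinAddProb α) (κ : α → FinAddProb β) : FinAddProb β where
  toFun A := ν.integral (massFamily κ A)
  nonneg A := ν.integral_nonneg fun a => (κ a).nonneg A
  apply_univ := by
    have family_eq : massFamily κ Set.univ = 1 := lp.ext <| funext fun a => (κ a).apply_univ
    rw [family_eq, integral_one]
  apply_union A B hAB := by
    have family_eq : massFamily κ (A ∪ B) = massFamily κ A + massFamily κ B :=
      lp.ext <| funext fun a => (κ a).apply_union A B hAB
    rw [family_eq, map_add]

lemma map_bind (ν : FinAddProb α) (κ : α → FinAddProb β) (φ : β → γ) :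
    (ν.bind κ).map φ = ν.bind fun a => (κ a).map φ := rfl

lemma bind_map (ν : FinAddProb α) (φ : α → β) (κ : β → FinAddProb γ) :
    (ν.map φ).bind κ = ν.bind (κ ∘ φ) := by
  ext A
  exact integral_map φ ν (massFamily κ A)

/-- Invariance of a finitely additive probability measure under right translations. -/
def IsRightInvariant {M : Type*} [Mul M] (μ : FinAddProb M) : Prop :=
  ∀ g : M, μ.map (· * g) = μ

end FinAddProb

section Group

variable {G : Type*} [Group G]

lemma exists_isRightInvariantFAPM_iff :
    (∃ μ : Set G → ℝ, IsRightInvariantFAPM μ) ↔ ∃ μ : FinAddProb G, μ.IsRightInvariant := by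
  constructor
  · rintro ⟨μ, hbounds, huniv, hunion, hinv⟩
    refine ⟨⟨μ, fun A => (hbounds A).1, huniv, hunion⟩, fun g => ?_⟩
    ext A
    simpa using! hinv A g⁻¹
  · rintro ⟨μ, hμ⟩
    refine ⟨μ, fun A => ⟨μ.nonneg A, μ.apply_le_one A⟩, μ.apply_univ, μ.apply_union, fun A g => ?_⟩
    rw [Set.image_mul_right]
    exact congrArg (· A) (hμ g⁻¹)

namespace FinAddProb

variable {N : Subgroup G} [N.Normal] {μ : FinAddProb N}

/-- The translate of a right-invariant measure on `N` to a coset of `N`, seen as a measure on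
`G`. The coset `g N` is parametrized by `n ↦ n * g`, using that `N` is normal. -/
def onCoset (hμ : μ.IsRightInvariant) : G ⧸ N → FinAddProb G :=
  Quotient.lift (fun g => μ.map fun n : N => (n : G) * g) fun a b hab => by
    have hmem : b * a⁻¹ ∈ N :=
      (Subgroup.Normal.mem_comm_iff inferInstance).1 (QuotientGroup.leftRel_apply.1 hab)
    calc μ.map (fun n : N => (n : G) * a)
        = (μ.map (· * ⟨b * a⁻¹, hmem⟩)).map (fun n : N => (n : G) * a) := by rw [hμ]
      _ = μ.map (fun n : N => (n : G) * b) := by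
        rw [map_map]
        congr 1
        ext n
        simp [mul_assoc]

lemma onCoset_map_mul_right (hμ : μ.IsRightInvariant) (q : G ⧸ N) (g : G) :
    (onCoset hμ q).map (· * g) = onCoset hμ (q * g) := by
  induction q using QuotientGroup.induction_on with
  | H a =>
    change μ.map (fun n : N => (n : G) * a * g) = μ.map (fun n : N => (n : G) * (a * g))
    simp only [mul_assoc]

lemma isRightInvariant_bind_onCoset (hμ : μ.IsRightInvariant) {ν : FinAddProb (G ⧸ N)}
    (hν : ν.IsRightInvariant) : (ν.bind (onCoset hμ)).IsRightInvariant := fun g =>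
  calc (ν.bind (onCoset hμ)).map (· * g)
      = ν.bind (fun q => onCoset hμ (q * g)) := by
        simp only [map_bind, onCoset_map_mul_right]
    _ = (ν.map (· * (g : G ⧸ N))).bind (onCoset hμ) := (bind_map ν _ _).symm
    _ = ν.bind (onCoset hμ) := by rw [hν]

end FinAddProb

end Group

/-- If both `N ⊴ G` and `G/N` admit right-invariant finitely additive probability measures,
then so does `G`. -/
theorem amenable_of_normal_and_quotient_amenable {G : Type*} [Group G]
    (N : Subgroup G) [N.Normal]
    (hN : ∃ μ : Set N → ℝ, IsRightInvariantFAPM μ)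
    (hQ : ∃ μ : Set (G ⧸ N) → ℝ, IsRightInvariantFAPM μ) :
    ∃ μ : Set G → ℝ, IsRightInvariantFAPM μ := by
  obtain ⟨μ, hμ⟩ := exists_isRightInvariantFAPM_iff.1 hN
  obtain ⟨ν, hν⟩ := exists_isRightInvariantFAPM_iff.1 hQ
  exact exists_isRightInvariantFAPM_iff.2 ⟨ν.bind (FinAddProb.onCoset hμ),
    FinAddProb.isRightInvariant_bind_onCoset hμ hν⟩
end

section
/- If every finitely generated subgroup of a group G admits a right-invariant finitely additive probability measure, then G itself admits a right-invariant finitely additive probability measure. -/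
/-- A finitely additive probability measure defined on all subsets of a type, without any
invariance, so that it can be studied apart from a group structure. The bound `μ X ≤ 1` is not a
field: it is `IsFinAddProb.le_one`. -/
structure IsFinAddProb {α : Type*} (μ : Set α → ℝ) : Prop where
  nonneg : ∀ X, 0 ≤ μ X
  univ : μ Set.univ = 1
  union : ∀ X Y, Disjoint X Y → μ (X ∪ Y) = μ X + μ Y

namespace IsFinAddProb

variable {α β : Type*} {μ : Set α → ℝ}

theorem le_one (hμ : IsFinAddProb μ) (X : Set α) : μ X ≤ 1 :=
  calc
    μ X ≤ μ X + μ Xᶜ := le_add_of_nonneg_right (hμ.nonneg _)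
    _ = μ (X ∪ Xᶜ) := (hμ.union X Xᶜ disjoint_compl_right).symm
    _ = 1 := by rw [Set.union_compl_self, hμ.univ]

theorem map (hμ : IsFinAddProb μ) (f : α → β) : IsFinAddProb fun X ↦ μ (f ⁻¹' X) where
  nonneg _ := hμ.nonneg _
  univ := hμ.univ
  union _ _ hXY := hμ.union _ _ (hXY.preimage f)

end IsFinAddProb

section Compactness

variable {α : Type*}

theorem isClosed_setOfPred_isFinAddProb : IsClosed {μ : Set α → ℝ | IsFinAddProb μ} := by
  have h_nonneg : IsClosed {μ : Set α → ℝ | ∀ X, 0 ≤ μ X} := by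
    simp only [Set.ofPred_forall]
    exact isClosed_iInter fun X ↦ isClosed_le continuous_const (continuous_apply X)
  have h_univ : IsClosed {μ : Set α → ℝ | μ Set.univ = 1} :=
    isClosed_eq (continuous_apply _) continuous_const
  have h_union : IsClosed {μ : Set α → ℝ | ∀ X Y, Disjoint X Y → μ (X ∪ Y) = μ X + μ Y} := by
    simp only [Set.ofPred_forall]
    exact isClosed_iInter fun X ↦ isClosed_iInter fun Y ↦ isClosed_iInter fun _ ↦
      isClosed_eq (continuous_apply _) ((continuous_apply X).add (continuous_apply Y))
  convert h_nonneg.inter (h_univ.inter h_union) using 1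
  ext μ
  exact ⟨fun hμ ↦ ⟨hμ.nonneg, hμ.univ, hμ.union⟩, fun ⟨h₀, h₁, h₂⟩ ↦ ⟨h₀, h₁, h₂⟩⟩

theorem isCompact_setOfPred_isFinAddProb : IsCompact {μ : Set α → ℝ | IsFinAddProb μ} :=
  (isCompact_univ_pi fun _ ↦ isCompact_Icc).of_isClosed_subset isClosed_setOfPred_isFinAddProb
    fun _ hμ X _ ↦ ⟨hμ.nonneg X, hμ.le_one X⟩

theorem isClosed_setOfPred_forall_image_eq (f : α → α) :
    IsClosed {μ : Set α → ℝ | ∀ X, μ (f '' X) = μ X} := by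
  simp only [Set.ofPred_forall]
  exact isClosed_iInter fun X ↦ isClosed_eq (continuous_apply _) (continuous_apply X)

theorem exists_isFinAddProb_forall_image_eq {ι : Type*} (f : ι → α → α)
    (h : ∀ F : Finset ι, ∃ μ, IsFinAddProb μ ∧ ∀ i ∈ F, ∀ X, μ (f i '' X) = μ X) :
    ∃ μ, IsFinAddProb μ ∧ ∀ i X, μ (f i '' X) = μ X := by
  obtain ⟨μ, hμ, hμf⟩ := isCompact_setOfPred_isFinAddProb.inter_iInter_nonempty
    (fun i ↦ {μ | ∀ X, μ (f i '' X) = μ X}) (fun i ↦ isClosed_setOfPred_forall_image_eq (f i))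
    fun F ↦ (h F).imp fun _ ↦ And.imp_right Set.mem_iInter₂.2
  exact ⟨μ, hμ, Set.mem_iInter.1 hμf⟩

end Compactness

section Group

variable {G H : Type*} [Group G] [Group H]

theorem isRightInvariantFAPM_iff {μ : Set G → ℝ} :
    IsRightInvariantFAPM μ ↔ IsFinAddProb μ ∧ ∀ g X, μ ((· * g) '' X) = μ X :=
  ⟨fun ⟨h_mem, h_univ, h_union, h_inv⟩ ↦
    ⟨⟨fun X ↦ (h_mem X).1, h_univ, h_union⟩, fun g X ↦ h_inv X g⟩,
  fun ⟨hμ, h_inv⟩ ↦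
    ⟨fun X ↦ ⟨hμ.nonneg X, hμ.le_one X⟩, hμ.univ, hμ.union, fun X g ↦ h_inv g X⟩⟩

theorem preimage_image_mul_right (φ : H →* G) (h : H) (X : Set G) :
    φ ⁻¹' ((· * φ h) '' X) = (· * h) '' (φ ⁻¹' X) := by
  ext x
  simp only [Set.image_mul_right, Set.mem_preimage, map_mul, map_inv]

end Group

/-- If every finitely generated subgroup of `G` admits a right-invariant finitely additive
probability measure, then so does `G`. -/
theorem amenable_of_fg_subgroups_amenable {G : Type*} [Group G]
    (h : ∀ H : Subgroup G, H.FG → ∃ μ : Set H → ℝ, IsRightInvariantFAPM μ) :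
    ∃ μ : Set G → ℝ, IsRightInvariantFAPM μ := by
  simp only [isRightInvariantFAPM_iff]
  refine exists_isFinAddProb_forall_image_eq (fun g x ↦ x * g) fun F ↦ ?_
  let K := Subgroup.closure (F : Set G)
  obtain ⟨μ, hμ⟩ := h K ⟨F, rfl⟩
  obtain ⟨hμ, h_inv⟩ := isRightInvariantFAPM_iff.1 hμ
  refine ⟨fun X ↦ μ (K.subtype ⁻¹' X), hμ.map K.subtype, fun g hg X ↦ ?_⟩
  let k : K := ⟨g, Subgroup.subset_closure hg⟩
  calc
    μ (K.subtype ⁻¹' ((· * g) '' X)) = μ ((· * k) '' (K.subtype ⁻¹' X)) :=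
      congrArg μ (preimage_image_mul_right K.subtype k X)
    _ = μ (K.subtype ⁻¹' X) := h_inv k _
end

section
/- If a group G satisfies the Følner condition, then G admits a right-invariant finitely additive probability measure; that is, G is amenable. -/
open scoped Classical

/-- A group `G` satisfies the Følner condition if for every finite `X ⊆ G` and `ε > 0`
there is a finite nonempty `F ⊆ G` with `|F \ Fg| / |F| < ε` for all `g ∈ X`. -/
def FolnerCondition (G : Type*) [Group G] : Prop :=
  ∀ (X : Finset G) (ε : ℝ), 0 < ε → ∃ F : Finset G, F.Nonempty ∧
    ∀ g ∈ X, ((F \ F.image (· * g)).card : ℝ) / (F.card : ℝ) < ε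

/-!
For each finite `X ⊆ G` and each `n`, take a finite set `F` with `|F \ Fg| / |F| < 1 / (n + 1)` for
all `g ∈ X`. Ordered by `(X, n)`, these sets form a Følner net for the action of `G` on itself by
right translation, with respect to the counting measure. The density of a subset of `G` in the sets
of the net converges along an ultrafilter, and the limits form the invariant measure.
-/

open Filter MeasureTheory MulOpposite
open scoped Topology Pointwise symmDiff

lemma card_symmDiff_of_card_eq {α : Type*} [DecidableEq α] {s t : Finset α}
    (h : s.card = t.card) : (s ∆ t).card = 2 * (t \ s).card := by
  rw [symmDiff_def, Finset.sup_eq_union, Finset.card_union_of_disjoint disjoint_sdiff_sdiff,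
    Finset.card_sdiff_comm h, two_mul]

lemma isFoelner_count_of_tendsto_card_sdiff {G X ι : Type*} [Group G] [MulAction G X]
    [DecidableEq X] [MeasurableSpace X] [MeasurableSingletonClass X]
    {l : Filter ι} {F : ι → Finset X}
    (hne : ∀ᶠ i in l, (F i).Nonempty)
    (hlim : ∀ g : G, Tendsto (fun i ↦ ((F i \ g • F i).card : ℝ) / (F i).card) l (𝓝 0)) :
    IsFoelner G Measure.count l (fun i ↦ (F i : Set X)) where
  eventually_measurableSet := .of_forall fun i ↦ (F i).measurableSet
  eventually_meas_ne_zero := hne.mono fun i hi ↦ by simpa using hi.ne_empty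
  eventually_meas_ne_top := .of_forall fun i ↦ by simp
  tendsto_meas_smul_symmDiff g := by
    have hcount (i : ι) :
        Measure.count ((g • (F i : Set X)) ∆ F i) = (2 * (F i \ g • F i).card : ℕ) := by
      rw [← Finset.coe_smul_finset, ← Finset.coe_symmDiff, Measure.count_apply_finset,
        card_symmDiff_of_card_eq (Finset.card_smul_finset g (F i))]
    have htwice := ENNReal.tendsto_ofReal ((hlim g).const_mul 2)
    rw [mul_zero, ENNReal.ofReal_zero] at htwice
    refine htwice.congr' (hne.mono fun i hi ↦ ?_)
    have hpos : (0 : ℝ) < (F i).card := by exact_mod_cast hi.card_pos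
    simp only [hcount, Measure.count_apply_finset]
    rw [← mul_div_assoc, ENNReal.ofReal_div_of_pos hpos]
    norm_cast

lemma FolnerCondition.exists_isFoelner {G : Type*} [Group G] [MeasurableSpace G]
    [MeasurableSingletonClass G] (h : FolnerCondition G) :
    ∃ F : Finset G × ℕ → Set G, IsFoelner Gᵐᵒᵖ Measure.count atTop F := by
  choose F hne hF using fun i : Finset G × ℕ ↦ h i.1 (1 / ((i.2 : ℝ) + 1)) (by positivity)
  refine ⟨_, isFoelner_count_of_tendsto_card_sdiff (.of_forall hne) fun g ↦ ?_⟩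
  have hε : Tendsto (fun i : Finset G × ℕ ↦ 1 / ((i.2 : ℝ) + 1)) atTop (𝓝 0) := by
    rw [← prod_atTop_atTop_eq]
    exact tendsto_one_div_add_atTop_nhds_zero_nat.comp tendsto_snd
  have hmem : ∀ᶠ i : Finset G × ℕ in atTop, unop g ∈ i.1 :=
    (eventually_ge_atTop ({unop g}, 0)).mono fun i hi ↦ Finset.singleton_subset_iff.1 hi.1
  exact squeeze_zero' (.of_forall fun i ↦ by positivity)
    (hmem.mono fun i hi ↦ (hF i _ hi).le) hε

lemma isRightInvariantFAPM_toReal {G : Type*} [Group G] {m : Set G → ENNReal}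
    (huniv : m Set.univ = 1) (hunion : ∀ X Y, Disjoint X Y → m (X ∪ Y) = m X + m Y)
    (hsmul : ∀ (g : Gᵐᵒᵖ) X, m (g • X) = m X) :
    IsRightInvariantFAPM fun X ↦ (m X).toReal := by
  have hle_one (X : Set G) : m X ≤ 1 := by
    rw [← huniv, ← Set.union_compl_self X, hunion X Xᶜ disjoint_compl_right]
    exact le_self_add
  have hne_top (X : Set G) : m X ≠ ⊤ := ne_top_of_le_ne_top ENNReal.one_ne_top (hle_one X)
  refine ⟨fun X ↦ ⟨ENNReal.toReal_nonneg, ?_⟩, ?_, fun X Y hXY ↦ ?_,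
    fun X g ↦ congrArg ENNReal.toReal (hsmul (op g) X)⟩
  · exact ENNReal.toReal_mono ENNReal.one_ne_top (hle_one X)
  · exact congrArg ENNReal.toReal huniv
  · simp only [hunion X Y hXY, ENNReal.toReal_add (hne_top X) (hne_top Y)]

/-- If `G` satisfies the Følner condition, then `G` admits a right-invariant finitely
additive probability measure, i.e. `G` is amenable. -/
theorem amenable_of_folnerCondition {G : Type*} [Group G] (h : FolnerCondition G) :
    ∃ μ : Set G → ℝ, IsRightInvariantFAPM μ := by
  let _ : MeasurableSpace G := ⊤
  obtain ⟨F, hF⟩ := h.exists_isFoelner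
  obtain ⟨m, huniv, hunion, hsmul⟩ := hF.amenable
  exact ⟨_, isRightInvariantFAPM_toReal huniv (fun X Y ↦ hunion X Y trivial) hsmul⟩
end

section
/- Let a group G act on the right on a set Ω. If there exist pairwise disjoint subsets X_1,…,X_n and Y_1,…,Y_m of Ω and elements g_1,…,g_n, h_1,…,h_m of G such that Ω = ⋃_{i=1}^n X_i g_i = ⋃_{j=1}^m Y_j h_j (unions not assumed disjoint), then Ω is G-paradoxical, i.e. there exist pairwise disjoint subsets X'_1,…,X'_n and Y'_1,…,Y'_m of Ω and elements g'_1,…,g'_n, h'_1,…,h'_m of G such that Ω = (⨆_{i=1}^n X'_i) ⊔ (⨆_{j=1}^m Y'_j) = ⨆_{i=1}^n X'_i g'_i = ⨆_{j=1}^m Y'_j h'_j, where ⊔ and ⨆ denote disjoint unions. -/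
/-!
Disjointness of the `Xᵢ` turns the covering of `Ω` by the `Xᵢgᵢ` into an injection `s` of `Ω` into
`⋃ Xᵢ` sending each `y` to a preimage of `y` under some `gᵢ`; let `t` be the analogous injection
into `⋃ Yⱼ`. Then `t⁻¹` maps `range t` bijectively onto `Ω`, moving each point by some `hⱼ`.
Replacing `gᵢ` by `gᵢgₒ⁻¹`, one may assume that `1` is among the `gᵢ`. The Schröder–Bernstein
construction for the inclusion of `(range t)ᶜ` in `Ω` and for `s` gives a bijection of `(range t)ᶜ`
onto `Ω` which is everywhere the identity or `s⁻¹`, so it also moves each point by some `gᵢ`. The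
level sets of the group element used are the required pieces.
-/

open Function Set

section Decomposition

variable {α β ι : Type*}

theorem exists_injective_section_of_iUnion_image_eq_univ {φ : ι → α → β} {X : ι → Set α}
    (hdisj : Pairwise (Disjoint on X)) (hcover : ⋃ i, φ i '' X i = univ) :
    ∃ s : β → α, Injective s ∧ (∀ y, s y ∈ ⋃ i, X i) ∧ ∀ y, ∃ i, φ i (s y) = y := by
  have hpreimage (y : β) : ∃ x i, x ∈ X i ∧ φ i x = y := by
    obtain ⟨i, x, hx, hxy⟩ := mem_iUnion.1 (hcover ▸ mem_univ y)
    exact ⟨x, i, hx, hxy⟩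
  choose s index hmem hsection using hpreimage
  refine ⟨s, fun y z hyz => ?_, fun y => mem_iUnion_of_mem _ (hmem y), fun y => ⟨_, hsection y⟩⟩
  have hindex : index y = index z :=
    hdisj.eq (not_disjoint_iff.2 ⟨s y, hmem y, hyz ▸ hmem z⟩)
  rw [← hsection y, ← hsection z, hindex, hyz]

theorem exists_bijective_of_injective_section {φ : ι → α → α} {S : Set α} {s : α → α}
    (hfix : ∀ x, ∃ i, φ i x = x) (hs : Injective s) (hmem : ∀ y, s y ∈ S)
    (hsection : ∀ y, ∃ i, φ i (s y) = y) :
    ∃ f : S → α, Bijective f ∧ ∀ x : S, ∃ i, φ i x = f x :=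
  Embedding.schroeder_bernstein_of_rel Subtype.val_injective (hs.codRestrict hmem)
    (fun x y => ∃ i, φ i x = y) (fun x => hfix x) hsection

theorem exists_decomposition_of_bijective {φ : ι → α → β} {S : Set α} {f : S → β}
    (hf : Bijective f) (hφ : ∀ x : S, ∃ i, φ i x = f x) :
    ∃ X : ι → Set α, Pairwise (Disjoint on X) ∧ ⋃ i, X i = S ∧
      ⋃ i, φ i '' X i = univ ∧ Pairwise (Disjoint on fun i => φ i '' X i) := by
  choose index hindex using hφ
  have himage (i : ι) : φ i '' (Subtype.val '' (index ⁻¹' {i})) = f '' (index ⁻¹' {i}) := by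
    rw [image_image]
    exact image_congr fun x hx => hx ▸ hindex x
  have hfibres : Pairwise (Disjoint on fun i => index ⁻¹' {i}) := pairwise_disjoint_fiber index
  have hcover : ⋃ i, index ⁻¹' {i} = univ :=
    eq_univ_of_forall fun x => mem_iUnion_of_mem (index x) rfl
  refine ⟨fun i => Subtype.val '' (index ⁻¹' {i}), fun i j hij => ?_, ?_, ?_, fun i j hij => ?_⟩
  · exact disjoint_image_of_injective Subtype.val_injective (hfibres hij)
  · rw [← image_iUnion, hcover, image_univ, Subtype.range_coe]
  · simp only [himage]
    rw [← image_iUnion, hcover, image_univ, hf.surjective.range_eq]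
  · simp only [onFun, himage]
    exact disjoint_image_of_injective hf.injective (hfibres hij)

end Decomposition

theorem exists_cover_and_forall_exists_act_eq_self {G Ω ι : Type*} [Group G] {act : Ω → G → Ω}
    (hone : ∀ x : Ω, act x 1 = x)
    (hmul : ∀ (x : Ω) (g g' : G), act x (g * g') = act (act x g) g')
    {X : ι → Set Ω} {g : ι → G} (hX : ⋃ i, (fun x => act x (g i)) '' X i = univ) :
    ∃ g' : ι → G, ⋃ i, (fun x => act x (g' i)) '' X i = univ ∧ ∀ x, ∃ i, act x (g' i) = x := by
  rcases isEmpty_or_nonempty Ω with _ | ⟨⟨y⟩⟩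
  · exact ⟨g, hX, isEmptyElim⟩
  obtain ⟨o, -⟩ := mem_iUnion.1 (hX ▸ mem_univ y)
  refine ⟨fun i => g i * (g o)⁻¹, eq_univ_of_forall fun z => ?_, fun x => ⟨o, ?_⟩⟩
  · obtain ⟨i, x, hx, hxz : act x (g i) = act z (g o)⟩ :=
      mem_iUnion.1 (hX ▸ mem_univ (act z (g o)))
    refine mem_iUnion.2 ⟨i, x, hx, ?_⟩
    simp only [hmul, hxz]
    rw [← hmul, mul_inv_cancel, hone]
  · simp only [mul_inv_cancel, hone]

theorem paradoxical_of_weak_decomposition_general {G Ω ι κ : Type*} [Group G]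
    (act : Ω → G → Ω)
    (hone : ∀ x : Ω, act x 1 = x)
    (hmul : ∀ (x : Ω) (g g' : G), act x (g * g') = act (act x g) g')
    (X : ι → Set Ω) (Y : κ → Set Ω) (g : ι → G) (h : κ → G)
    (hXX : ∀ i j, i ≠ j → Disjoint (X i) (X j))
    (hYY : ∀ i j, i ≠ j → Disjoint (Y i) (Y j))
    (hXY : ∀ i j, Disjoint (X i) (Y j))
    (hX : (⋃ i, (fun x => act x (g i)) '' X i) = univ)
    (hY : (⋃ j, (fun x => act x (h j)) '' Y j) = univ) :
    ∃ (X' : ι → Set Ω) (Y' : κ → Set Ω) (g' : ι → G) (h' : κ → G),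
      (∀ i j, i ≠ j → Disjoint (X' i) (X' j)) ∧
      (∀ i j, i ≠ j → Disjoint (Y' i) (Y' j)) ∧
      (∀ i j, Disjoint (X' i) (Y' j)) ∧
      ((⋃ i, X' i) ∪ ⋃ j, Y' j) = univ ∧
      (⋃ i, (fun x => act x (g' i)) '' X' i) = univ ∧
      (⋃ j, (fun x => act x (h' j)) '' Y' j) = univ ∧
      (∀ i j, i ≠ j →
        Disjoint ((fun x => act x (g' i)) '' X' i) ((fun x => act x (g' j)) '' X' j)) ∧
      (∀ i j, i ≠ j →
        Disjoint ((fun x => act x (h' i)) '' Y' i) ((fun x => act x (h' j)) '' Y' j)) := by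
  obtain ⟨g', hX', hfix⟩ := exists_cover_and_forall_exists_act_eq_self hone hmul hX
  obtain ⟨s, hs, hsX, hsection⟩ :=
    exists_injective_section_of_iUnion_image_eq_univ (fun i j => hXX i j) hX'
  obtain ⟨t, ht, htY, htsection⟩ :=
    exists_injective_section_of_iUnion_image_eq_univ (fun i j => hYY i j) hY
  have hs_range (y : Ω) : s y ∈ (range t)ᶜ := by
    rintro ⟨z, hz⟩
    have hdisj : Disjoint (⋃ i, X i) (⋃ j, Y j) := by
      simpa only [disjoint_iUnion_left, disjoint_iUnion_right] using fun j i => hXY i j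
    exact disjoint_left.1 hdisj (hsX y) (hz ▸ htY z)
  obtain ⟨f, hf, hfg⟩ := exists_bijective_of_injective_section hfix hs hs_range hsection
  obtain ⟨X', hXX', hX'union, hX'cover, hX'image⟩ :=
    exists_decomposition_of_bijective (φ := fun i x => act x (g' i)) hf hfg
  have hth (x : range t) : ∃ j, act x (h j) = (Equiv.ofInjective t ht).symm x := by
    obtain ⟨_, y, rfl⟩ := x
    simpa only [Equiv.ofInjective_symm_apply] using htsection y
  obtain ⟨Y', hYY', hY'union, hY'cover, hY'image⟩ :=
    exists_decomposition_of_bijective (φ := fun j x => act x (h j))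
      (Equiv.ofInjective t ht).symm.bijective hth
  refine ⟨X', Y', g', h, fun _ _ hij => hXX' hij, fun _ _ hij => hYY' hij, fun i j => ?_, ?_,
    hX'cover, hY'cover, fun _ _ hij => hX'image hij, fun _ _ hij => hY'image hij⟩
  · exact disjoint_compl_left.mono (hX'union ▸ subset_iUnion X' i) (hY'union ▸ subset_iUnion Y' j)
  · rw [hX'union, hY'union, compl_union_self]

/-- Let a group `G` act on the right on `Ω` via `act`. If there are pairwise disjoint
subsets `X₁,…,Xₙ, Y₁,…,Yₘ` of `Ω` and group elements `g₁,…,gₙ, h₁,…,hₘ` with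
`Ω = ⋃ Xᵢgᵢ = ⋃ Yⱼhⱼ` (unions not assumed disjoint), then `Ω` is `G`-paradoxical:
there are pairwise disjoint `X'₁,…,X'ₙ, Y'₁,…,Y'ₘ` and elements `g'ᵢ, h'ⱼ` with
`Ω = (⨆ X'ᵢ) ⊔ (⨆ Y'ⱼ) = ⨆ X'ᵢg'ᵢ = ⨆ Y'ⱼh'ⱼ`, all indicated unions disjoint. -/
theorem paradoxical_of_weak_decomposition {G Ω : Type*} [Group G]
    (act : Ω → G → Ω)
    (hone : ∀ x : Ω, act x 1 = x)
    (hmul : ∀ (x : Ω) (g g' : G), act x (g * g') = act (act x g) g')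
    (n m : ℕ) (X : Fin n → Set Ω) (Y : Fin m → Set Ω) (g : Fin n → G) (h : Fin m → G)
    (hXX : ∀ i j, i ≠ j → Disjoint (X i) (X j))
    (hYY : ∀ i j, i ≠ j → Disjoint (Y i) (Y j))
    (hXY : ∀ i j, Disjoint (X i) (Y j))
    (hX : (⋃ i, (fun x => act x (g i)) '' X i) = Set.univ)
    (hY : (⋃ j, (fun x => act x (h j)) '' Y j) = Set.univ) :
    ∃ (X' : Fin n → Set Ω) (Y' : Fin m → Set Ω) (g' : Fin n → G) (h' : Fin m → G),
      (∀ i j, i ≠ j → Disjoint (X' i) (X' j)) ∧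
      (∀ i j, i ≠ j → Disjoint (Y' i) (Y' j)) ∧
      (∀ i j, Disjoint (X' i) (Y' j)) ∧
      ((⋃ i, X' i) ∪ ⋃ j, Y' j) = Set.univ ∧
      (⋃ i, (fun x => act x (g' i)) '' X' i) = Set.univ ∧
      (⋃ j, (fun x => act x (h' j)) '' Y' j) = Set.univ ∧
      (∀ i j, i ≠ j →
        Disjoint ((fun x => act x (g' i)) '' X' i) ((fun x => act x (g' j)) '' X' j)) ∧
      (∀ i j, i ≠ j →
        Disjoint ((fun x => act x (h' i)) '' Y' i) ((fun x => act x (h' j)) '' Y' j)) :=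
  paradoxical_of_weak_decomposition_general act hone hmul X Y g h hXX hYY hXY hX hY
end

section
/- For a group G the following are equivalent: (i) G is paradoxical (the action of G on itself by right multiplication is paradoxical); (ii) every free right action of G on a nonempty set is paradoxical; (iii) there exists a free right action of G on a nonempty set that is paradoxical. -/
/-- A subset `E` of a right `G`-set `Ω` (with action `act`) is `G`-paradoxical:
there are pairwise disjoint subsets `X₁,…,Xₙ, Y₁,…,Yₘ` of `E` and group elements
`g₁,…,gₙ, h₁,…,hₘ` such that `E = (⨆ Xᵢ) ⊔ (⨆ Yⱼ) = ⨆ Xᵢgᵢ = ⨆ Yⱼhⱼ`,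
all indicated unions being disjoint. -/
def IsParadoxical {G Ω : Type*} [Group G] (act : Ω → G → Ω) (E : Set Ω) : Prop :=
  ∃ (n m : ℕ) (X : Fin n → Set Ω) (Y : Fin m → Set Ω) (g : Fin n → G) (h : Fin m → G),
    (∀ i, X i ⊆ E) ∧ (∀ j, Y j ⊆ E) ∧
    (∀ i j, i ≠ j → Disjoint (X i) (X j)) ∧
    (∀ i j, i ≠ j → Disjoint (Y i) (Y j)) ∧
    (∀ i j, Disjoint (X i) (Y j)) ∧
    E = ((⋃ i, X i) ∪ ⋃ j, Y j) ∧
    E = (⋃ i, (fun x => act x (g i)) '' X i) ∧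
    E = (⋃ j, (fun x => act x (h j)) '' Y j) ∧
    (∀ i j, i ≠ j →
      Disjoint ((fun x => act x (g i)) '' X i) ((fun x => act x (g j)) '' X j)) ∧
    (∀ i j, i ≠ j →
      Disjoint ((fun x => act x (h i)) '' Y i) ((fun x => act x (h j)) '' Y j))

/-!
Paradoxical decompositions pull back along equivariant maps, because taking preimages under such a
map commutes with translations. An orbit map `g ↦ x·g` goes from `G` to any nonempty right `G`-set.
If the action is free there is also an equivariant map in the other direction: choose a base point
in each orbit and send `x` to the unique group element taking the base point of its orbit to `x`.
-/

open MulOpposite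
open scoped Pointwise

/-- The laws of a right action, for an action given as a bare function as in `IsParadoxical`. -/
def IsRightAction {G Ω : Type*} [Monoid G] (act : Ω → G → Ω) : Prop :=
  (∀ x, act x 1 = x) ∧ ∀ x g g', act x (g * g') = act (act x g) g'

/-- A right action of `G` as an action of the opposite monoid, which is how Mathlib encodes right
actions. -/
abbrev IsRightAction.mulAction {G Ω : Type*} [Monoid G] {act : Ω → G → Ω}
    (h : IsRightAction act) : MulAction Gᵐᵒᵖ Ω where
  smul g x := act x g.unop
  one_smul := h.1
  mul_smul g g' x := h.2 x g'.unop g.unop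

theorem nonempty_mulActionHom_of_isCancelSMul (G α : Type*) [Group G] [MulAction G α]
    [IsCancelSMul G α] : Nonempty (α →[G] G) := by
  let base (x : α) : α := (Quotient.mk (MulAction.orbitRel G α) x).out
  have base_smul (g : G) (x : α) : base (g • x) = base x :=
    congrArg Quotient.out MulAction.orbitRel.Quotient.quotient_smul_eq
  have exists_smul_base (x : α) : ∃ g : G, g • base x = x :=
    (MulAction.orbitRel G α).symm (Quotient.mk_out x)
  choose f f_smul_base using exists_smul_base
  refine ⟨f, fun g x => IsCancelSMul.right_cancel _ _ (base x) ?_⟩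
  calc f (g • x) • base x = g • x := by rw [← base_smul g, f_smul_base]
    _ = (g • f x) • base x := by rw [smul_assoc, f_smul_base]

namespace IsParadoxical

variable {G Ω Ω' : Type*} [Group G] [MulAction Gᵐᵒᵖ Ω] [MulAction Gᵐᵒᵖ Ω']

theorem preimage {E : Set Ω'} (hE : IsParadoxical (fun x (g : G) => op g • x) E)
    (f : Ω →[Gᵐᵒᵖ] Ω') : IsParadoxical (fun x (g : G) => op g • x) (f ⁻¹' E) := by
  obtain ⟨n, m, X, Y, g, h, hXE, hYE, hX, hY, hXY, hE, hEX, hEY, hXg, hYh⟩ := hE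
  simp only [Set.image_smul] at hEX hEY hXg hYh
  refine ⟨n, m, fun i => f ⁻¹' X i, fun j => f ⁻¹' Y j, g, h,
    fun i => Set.preimage_mono (hXE i), fun j => Set.preimage_mono (hYE j),
    fun i j hij => (hX i j hij).preimage f, fun i j hij => (hY i j hij).preimage f,
    fun i j => (hXY i j).preimage f, ?_⟩
  simp only [Set.image_smul, ← Group.preimage_smul_set, ← Set.preimage_iUnion,
    ← Set.preimage_union]
  exact ⟨congrArg _ hE, congrArg _ hEX, congrArg _ hEY,
    fun i j hij => (hXg i j hij).preimage f, fun i j hij => (hYh i j hij).preimage f⟩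

theorem group_of_smul [Nonempty Ω]
    (hΩ : IsParadoxical (fun (x : Ω) (g : G) => op g • x) Set.univ) :
    IsParadoxical (fun x g : G => x * g) Set.univ := by
  obtain ⟨x₀⟩ := ‹Nonempty Ω›
  let orbitMap : G →[Gᵐᵒᵖ] Ω := ⟨fun x => op x • x₀, fun g x => mul_smul g (op x) x₀⟩
  exact hΩ.preimage orbitMap

theorem smul_of_group [IsCancelSMul Gᵐᵒᵖ Ω]
    (hG : IsParadoxical (fun x g : G => x * g) Set.univ) :
    IsParadoxical (fun (x : Ω) (g : G) => op g • x) Set.univ := by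
  obtain ⟨f⟩ := nonempty_mulActionHom_of_isCancelSMul Gᵐᵒᵖ Ω
  let unopComp : Ω →[Gᵐᵒᵖ] G := ⟨fun x => (f x).unop, fun g x => congrArg unop (f.map_smul g x)⟩
  exact preimage hG unopComp

end IsParadoxical

theorem paradoxical_group_iff_free_actions_general.{u, v} (G : Type u) [Group G] :
    List.TFAE [
      IsParadoxical (fun (x g : G) => x * g) Set.univ,
      ∀ (Ω : Type (max u v)) (act : Ω → G → Ω), Nonempty Ω → IsRightAction act →
        (∀ (x : Ω) (g : G), act x g = x → g = 1) → IsParadoxical act Set.univ,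
      ∃ (Ω : Type (max u v)) (act : Ω → G → Ω), Nonempty Ω ∧ IsRightAction act ∧
        (∀ (x : Ω) (g : G), act x g = x → g = 1) ∧ IsParadoxical act Set.univ,
      ∃ (Ω : Type (max u v)) (act : Ω → G → Ω), Nonempty Ω ∧ IsRightAction act ∧
        IsParadoxical act Set.univ] := by
  tfae_have 1 → 2 := fun hG Ω act _ hact hfree => by
    let := hact.mulAction
    have : IsCancelSMul Gᵐᵒᵖ Ω :=
      isCancelSMul_iff_eq_one_of_smul_eq.2 fun g x hx => unop_injective (hfree x g.unop hx)
    exact hG.smul_of_group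
  tfae_have 2 → 3 := fun hall => by
    let act (x : ULift.{v} G) (g : G) : ULift.{v} G := ⟨x.down * g⟩
    have hact : IsRightAction act :=
      ⟨fun _ => congrArg ULift.up (mul_one _),
        fun _ g g' => congrArg ULift.up (mul_assoc _ g g').symm⟩
    have act_free (x : ULift G) (g : G) (hx : act x g = x) : g = 1 :=
      mul_eq_left.1 (congrArg ULift.down hx)
    exact ⟨ULift G, act, ⟨⟨1⟩⟩, hact, act_free, hall _ act ⟨⟨1⟩⟩ hact act_free⟩
  tfae_have 3 → 4 := fun ⟨Ω, act, hΩ, hact, _, hpar⟩ => ⟨Ω, act, hΩ, hact, hpar⟩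
  tfae_have 4 → 1 := fun ⟨_, _, _, hact, hpar⟩ =>
    let := hact.mulAction
    IsParadoxical.group_of_smul hpar
  tfae_finish

/-- For a group `G` the following are equivalent: (i) `G` is paradoxical (for the action
of `G` on itself by right multiplication); (ii) every free right action of `G` on a
nonempty set is paradoxical; (iii) some free right action of `G` on a nonempty set is
paradoxical. -/
theorem paradoxical_group_iff_free_actions (G : Type u) [Group G] :
    (IsParadoxical (fun (x g : G) => x * g) Set.univ ↔
      ∀ (Ω : Type u) (act : Ω → G → Ω), Nonempty Ω →
        (∀ x : Ω, act x 1 = x) →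
        (∀ (x : Ω) (g g' : G), act x (g * g') = act (act x g) g') →
        (∀ (x : Ω) (g : G), act x g = x → g = 1) →
        IsParadoxical act Set.univ) ∧
    ((∀ (Ω : Type u) (act : Ω → G → Ω), Nonempty Ω →
        (∀ x : Ω, act x 1 = x) →
        (∀ (x : Ω) (g g' : G), act x (g * g') = act (act x g) g') →
        (∀ (x : Ω) (g : G), act x g = x → g = 1) →
        IsParadoxical act Set.univ) ↔
      ∃ (Ω : Type u) (act : Ω → G → Ω), Nonempty Ω ∧
        (∀ x : Ω, act x 1 = x) ∧
        (∀ (x : Ω) (g g' : G), act x (g * g') = act (act x g) g') ∧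
        (∀ (x : Ω) (g : G), act x g = x → g = 1) ∧
        IsParadoxical act Set.univ) := by
  have tfae := paradoxical_group_iff_free_actions_general.{u, u} G
  have iffs := And.intro (tfae.out 0 1) (tfae.out 1 2)
  simpa only [IsRightAction, and_imp, and_assoc] using iffs
end

section
/- The rotation group SO(3) of 3×3 real orthogonal matrices of determinant 1 contains a subgroup isomorphic to the free group on two generators; equivalently, there is an injective group homomorphism from the free group of rank 2 into SO(3). In particular, the matrices A = (1/7)[[6,2,−3],[2,3,6],[3,−6,2]] and B = (1/7)[[2,6,−3],[−6,3,2],[3,2,6]] generate a free subgroup of rank 2 of SO(3). -/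
/-- The rotation matrix `A = (1/7)[[6,2,−3],[2,3,6],[3,−6,2]]`. -/
noncomputable def rotA : Matrix (Fin 3) (Fin 3) ℝ :=
  (7 : ℝ)⁻¹ • !![6, 2, -3; 2, 3, 6; 3, -6, 2]

/-- The rotation matrix `B = (1/7)[[2,6,−3],[−6,3,2],[3,2,6]]`. -/
noncomputable def rotB : Matrix (Fin 3) (Fin 3) ℝ :=
  (7 : ℝ)⁻¹ • !![2, 6, -3; -6, 3, 2; 3, 2, 6]

/-!
Modulo `7` the integer matrices `7A`, `7B` and their transposes have rank one: there are vectors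
`c (i, ±)` over `ZMod 7` such that the `i`-th matrix reduces to `c (i, +) ⊗ c (i, -)` and its
transpose to `c (i, -) ⊗ c (i, +)`. In a product of such rank-one matrices each pair of
adjacent letters contributes the dot product of the two vectors that meet, and these are the same
vector exactly when the two letters cancel. Since distinct vectors `c (i, ±)` are not orthogonal, a
nonempty reduced word of length `m` in `7A`, `7B` and their transposes is nonzero modulo `7`, so it
cannot be `7 ^ m` times the identity.
-/

open Matrix

section RankOne

variable {α n k : Type*} [Fintype n] [DecidableEq n] [CommSemiring k] [NoZeroDivisors k]

theorem exists_prod_vecMulVec_eq_vecMulVec {c r : α → n → k} (hr : ∀ x, r x ≠ 0) (L : List α) :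
    ∀ x, (x :: L).IsChain (fun y z => r y ⬝ᵥ c z ≠ 0) →
      ∃ v ≠ 0, ((x :: L).map fun y => vecMulVec (c y) (r y)).prod = vecMulVec (c x) v := by
  induction L with
  | nil => exact fun x _ => ⟨r x, hr x, by simp⟩
  | cons y L ih =>
    intro x hchain
    obtain ⟨hxy, hchain⟩ := List.isChain_cons_cons.mp hchain
    obtain ⟨v, hv, hprod⟩ := ih y hchain
    obtain ⟨j, hvj⟩ := Function.ne_iff.mp hv
    refine ⟨(r x ⬝ᵥ c y) • v, Function.ne_iff.mpr ⟨j, mul_ne_zero hxy hvj⟩, ?_⟩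
    rw [List.map_cons, List.prod_cons, hprod, vecMulVec_mul_vecMulVec]

theorem prod_vecMulVec_ne_zero {c r : α → n → k} (hc : ∀ x, c x ≠ 0) (hr : ∀ x, r x ≠ 0)
    {L : List α} (hL : L ≠ []) (hchain : L.IsChain fun y z => r y ⬝ᵥ c z ≠ 0) :
    (L.map fun y => vecMulVec (c y) (r y)).prod ≠ 0 := by
  obtain ⟨x, L, rfl⟩ := List.exists_cons_of_ne_nil hL
  obtain ⟨v, hv, hprod⟩ := exists_prod_vecMulVec_eq_vecMulVec hr L x hchain
  exact hprod ▸ vecMulVec_ne_zero (hc x) hv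

end RankOne

theorem mapMatrix_smul_one {n R S : Type*} [Fintype n] [DecidableEq n] [NonAssocSemiring R]
    [NonAssocSemiring S] (f : R →+* S) (a : R) :
    f.mapMatrix (a • (1 : Matrix n n R)) = f a • 1 := by
  rw [RingHom.mapMatrix_apply, Matrix.map_smul' _ _ _ (map_mul f), ← RingHom.mapMatrix_apply,
    map_one]

/-- The matrix attached to a letter of a word in a free group: `N i` for the `i`-th generator and
`(N i)ᵀ` for its inverse. If the generators are sent to orthogonal matrices and `N` clears their
denominators, this also clears the denominators of their inverses. -/
def letterMatrix {ι n R : Type*} (N : ι → Matrix n n R) (x : ι × Bool) : Matrix n n R :=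
  cond x.2 (N x.1) (N x.1)ᵀ

section Letters

variable {ι n R K k : Type*} [Fintype n] [DecidableEq n] [CommSemiring R] [CommRing K]
  [CommSemiring k] {f : R →+* K} {π : R →+* k}

theorem mapMatrix_letterMatrix_eq_smul {g : ι → orthogonalGroup n K} {N : ι → Matrix n n R} {q : R}
    (hN : ∀ i, f.mapMatrix (N i) = f q • (g i : Matrix n n K)) (x : ι × Bool) :
    f.mapMatrix (letterMatrix N x) =
      f q • ((cond x.2 (g x.1) (g x.1)⁻¹ : orthogonalGroup n K) : Matrix n n K) := by
  obtain ⟨i, _ | _⟩ := x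
  · change (f.mapMatrix (N i))ᵀ = f q • (g i : Matrix n n K)ᵀ
    rw [hN, transpose_smul]
  · exact hN i

theorem mapMatrix_prod_letterMatrix_eq_smul_lift {g : ι → orthogonalGroup n K}
    {N : ι → Matrix n n R} {q : R} (hN : ∀ i, f.mapMatrix (N i) = f q • (g i : Matrix n n K))
    (L : List (ι × Bool)) :
    f.mapMatrix (L.map (letterMatrix N)).prod =
      f q ^ L.length • (FreeGroup.lift g (FreeGroup.mk L) : Matrix n n K) := by
  rw [FreeGroup.lift_mk]
  induction L with
  | nil => simp
  | cons x L ih =>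
    rw [List.map_cons, List.prod_cons, map_mul, mapMatrix_letterMatrix_eq_smul hN, ih,
      List.map_cons, List.prod_cons, Submonoid.coe_mul, smul_mul_smul_comm, List.length_cons,
      pow_succ']

theorem mapMatrix_letterMatrix_eq_vecMulVec {N : ι → Matrix n n R} {c : ι × Bool → n → k}
    (hN : ∀ i, π.mapMatrix (N i) = vecMulVec (c (i, true)) (c (i, false))) (x : ι × Bool) :
    π.mapMatrix (letterMatrix N x) = vecMulVec (c x) (c (x.1, !x.2)) := by
  obtain ⟨i, _ | _⟩ := x
  · exact (congrArg transpose (hN i)).trans (transpose_vecMulVec _ _)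
  · exact hN i

theorem mapMatrix_prod_letterMatrix_ne_zero [NoZeroDivisors k] {N : ι → Matrix n n R}
    {c : ι × Bool → n → k}
    (hN : ∀ i, π.mapMatrix (N i) = vecMulVec (c (i, true)) (c (i, false)))
    (hc : Pairwise fun x y => c x ⬝ᵥ c y ≠ 0) {L : List (ι × Bool)} (hL : L ≠ [])
    (hred : FreeGroup.IsReduced L) :
    π.mapMatrix (L.map (letterMatrix N)).prod ≠ 0 := by
  have hc_ne_zero (x : ι × Bool) : c x ≠ 0 := by
    have hx : x ≠ (x.1, !x.2) := fun h => by simpa using congrArg Prod.snd h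
    exact fun h => hc hx (by rw [h, zero_dotProduct])
  have hchain : L.IsChain fun y z => c (y.1, !y.2) ⬝ᵥ c z ≠ 0 := by
    refine hred.imp fun y z hyz => hc ?_
    rintro rfl
    simpa using hyz rfl
  rw [map_list_prod, List.map_map]
  simpa only [Function.comp_def, mapMatrix_letterMatrix_eq_vecMulVec hN] using
    prod_vecMulVec_ne_zero hc_ne_zero (fun y => hc_ne_zero (y.1, !y.2)) hL hchain

theorem lift_injective_of_mapMatrix_eq_vecMulVec [NoZeroDivisors k]
    {g : ι → orthogonalGroup n K} {N : ι → Matrix n n R} {q : R} {c : ι × Bool → n → k}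
    (hf : Function.Injective f) (hq : π q = 0)
    (hNg : ∀ i, f.mapMatrix (N i) = f q • (g i : Matrix n n K))
    (hNc : ∀ i, π.mapMatrix (N i) = vecMulVec (c (i, true)) (c (i, false)))
    (hc : Pairwise fun x y => c x ⬝ᵥ c y ≠ 0) :
    Function.Injective (FreeGroup.lift g) := by
  classical
  rw [injective_iff_map_eq_one]
  intro w hw
  by_contra hw_ne_one
  have hL : w.toWord ≠ [] := mt FreeGroup.toWord_eq_nil_iff.mp hw_ne_one
  have hprod : (w.toWord.map (letterMatrix N)).prod = q ^ w.toWord.length • 1 := by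
    apply Matrix.map_injective hf
    calc f.mapMatrix (w.toWord.map (letterMatrix N)).prod
      _ = f q ^ w.toWord.length • 1 := by
        rw [mapMatrix_prod_letterMatrix_eq_smul_lift hNg, FreeGroup.mk_toWord, hw,
          OneMemClass.coe_one]
      _ = f.mapMatrix (q ^ w.toWord.length • 1) := by rw [mapMatrix_smul_one, map_pow]
  apply mapMatrix_prod_letterMatrix_ne_zero hNc hc hL FreeGroup.isReduced_toWord
  rw [hprod, mapMatrix_smul_one, map_pow, hq, zero_pow (by simpa using hL), zero_smul]

end Letters

theorem det_lift_eq_one {ι n K : Type*} [Fintype n] [DecidableEq n] [CommRing K]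
    {g : ι → orthogonalGroup n K} (hg : ∀ i, (g i : Matrix n n K).det = 1) (w : FreeGroup ι) :
    (FreeGroup.lift g w : Matrix n n K).det = 1 :=
  DFunLike.congr_fun (FreeGroup.ext_hom
    ((detMonoidHom.comp (orthogonalGroup n K).subtype).comp (FreeGroup.lift g)) 1
    fun i => by simpa using hg i) w

section Scaling

variable {n R K : Type*} [Fintype n] [DecidableEq n] [CommRing R] [Field K]
  {f : R →+* K} {N : Matrix n n R} {q : R}

theorem inv_smul_mapMatrix_mem_orthogonalGroup (hq : f q ≠ 0) (hN : N * Nᵀ = q ^ 2 • 1) :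
    (f q)⁻¹ • f.mapMatrix N ∈ orthogonalGroup n K := by
  have hmap : f.mapMatrix N * (f.mapMatrix N)ᵀ = f q ^ 2 • 1 := by
    rw [RingHom.mapMatrix_apply, ← transpose_map, ← RingHom.mapMatrix_apply,
      ← RingHom.mapMatrix_apply, ← map_mul, hN, mapMatrix_smul_one, map_pow]
  rw [mem_orthogonalGroup_iff, transpose_smul, smul_mul_smul_comm, hmap, smul_smul, ← sq,
    ← mul_pow, inv_mul_cancel₀ hq, one_pow, one_smul]

theorem det_inv_smul_mapMatrix_eq_one (hq : f q ≠ 0) (hN : N.det = q ^ Fintype.card n) :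
    ((f q)⁻¹ • f.mapMatrix N).det = 1 := by
  rw [det_smul, ← RingHom.map_det, hN, map_pow, ← mul_pow, inv_mul_cancel₀ hq, one_pow]

end Scaling

/-- The integer matrices `7A` and `7B`, whose reductions modulo `7` have rank one. -/
def scaledGenerator : Fin 2 → Matrix (Fin 3) (Fin 3) ℤ :=
  ![!![6, 2, -3; 2, 3, 6; 3, -6, 2], !![2, 6, -3; -6, 3, 2; 3, 2, 6]]

/-- The vectors `c (i, ±)` over `ZMod 7` whose outer products are the reductions of `7A` and `7B`;
`true` stands for `+`, as in the letters of `FreeGroup`. -/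
def reductionVector : Fin 2 × Bool → Fin 3 → ZMod 7
  | (0, true) => ![6, 2, 3]
  | (0, false) => ![1, 5, 3]
  | (1, true) => ![2, 1, 3]
  | (1, false) => ![1, 3, 2]

theorem scaledGenerator_mul_transpose (i : Fin 2) :
    scaledGenerator i * (scaledGenerator i)ᵀ = (7 : ℤ) ^ 2 • 1 := by
  decide +revert

theorem det_scaledGenerator (i : Fin 2) :
    (scaledGenerator i).det = 7 ^ Fintype.card (Fin 3) := by
  decide +revert

theorem mapMatrix_scaledGenerator_eq_vecMulVec (i : Fin 2) :
    (Int.castRingHom (ZMod 7)).mapMatrix (scaledGenerator i) =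
      vecMulVec (reductionVector (i, true)) (reductionVector (i, false)) := by
  ext j l
  rw [RingHom.mapMatrix_apply, map_apply, vecMulVec_apply]
  decide +revert

theorem pairwise_reductionVector_dotProduct_ne_zero :
    Pairwise fun x y => reductionVector x ⬝ᵥ reductionVector y ≠ 0 := by
  unfold Pairwise
  decide

/-- The rotations `A` and `B` as elements of the orthogonal group, to which the generators of the
free group are sent. They are obtained by scaling `scaledGenerator`. -/
noncomputable def so3Generator (i : Fin 2) : orthogonalGroup (Fin 3) ℝ :=
  ⟨(Int.castRingHom ℝ 7)⁻¹ • (Int.castRingHom ℝ).mapMatrix (scaledGenerator i),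
    inv_smul_mapMatrix_mem_orthogonalGroup (by simp) (scaledGenerator_mul_transpose i)⟩

theorem coe_so3Generator_zero : (so3Generator 0 : Matrix (Fin 3) (Fin 3) ℝ) = rotA := by
  ext i j
  fin_cases i <;> fin_cases j <;> simp [so3Generator, scaledGenerator, rotA]

theorem coe_so3Generator_one : (so3Generator 1 : Matrix (Fin 3) (Fin 3) ℝ) = rotB := by
  ext i j
  fin_cases i <;> fin_cases j <;> simp [so3Generator, scaledGenerator, rotB]

theorem mapMatrix_scaledGenerator_eq_smul_so3Generator (i : Fin 2) :
    (Int.castRingHom ℝ).mapMatrix (scaledGenerator i) =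
      Int.castRingHom ℝ 7 • (so3Generator i : Matrix (Fin 3) (Fin 3) ℝ) := by
  rw [so3Generator, smul_inv_smul₀ (by simp)]

theorem lift_so3Generator_injective : Function.Injective (FreeGroup.lift so3Generator) :=
  have : Fact (Nat.Prime 7) := ⟨by norm_num⟩
  lift_injective_of_mapMatrix_eq_vecMulVec (RingHom.injective_int _) (ZMod.natCast_self 7)
    mapMatrix_scaledGenerator_eq_smul_so3Generator mapMatrix_scaledGenerator_eq_vecMulVec
    pairwise_reductionVector_dotProduct_ne_zero

/-- `SO(3)` contains a subgroup isomorphic to the free group on two generators: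
there is an injective group homomorphism from the free group of rank 2 into the
orthogonal group whose image consists of matrices of determinant `1`; moreover it can be
chosen sending the generators to the matrices `A` and `B` above, so `A, B` generate a
free subgroup of rank 2 of `SO(3)`. -/
theorem so3_contains_free_group_of_rank_two :
    ∃ φ : FreeGroup (Fin 2) →* Matrix.orthogonalGroup (Fin 3) ℝ,
      Function.Injective φ ∧
      (∀ w : FreeGroup (Fin 2), ((φ w : Matrix (Fin 3) (Fin 3) ℝ)).det = 1) ∧
      (φ (FreeGroup.of 0) : Matrix (Fin 3) (Fin 3) ℝ) = rotA ∧
      (φ (FreeGroup.of 1) : Matrix (Fin 3) (Fin 3) ℝ) = rotB := by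
  refine ⟨FreeGroup.lift so3Generator, lift_so3Generator_injective,
    det_lift_eq_one fun i => ?_, ?_, ?_⟩
  · exact det_inv_smul_mapMatrix_eq_one (by simp) (det_scaledGenerator i)
  · rw [FreeGroup.lift_apply_of, coe_so3Generator_zero]
  · rw [FreeGroup.lift_apply_of, coe_so3Generator_one]
end

section
/- For every countable subset X of the unit sphere 𝕊² in ℝ³, the set 𝕊² \ X is SO(3)-equidecomposable to 𝕊². -/
/-- Two subsets `X, Y` of a right `G`-set `Ω` (with action `act`) are
`G`-equidecomposable: there are partitions `X = ⨆ᵢ₌₁ⁿ Xᵢ`, `Y = ⨆ᵢ₌₁ⁿ Yᵢ` into pairwise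
disjoint pieces and elements `g₁,…,gₙ ∈ G` with `Yᵢ = Xᵢgᵢ` for all `i`. -/
def Equidecomposable {G Ω : Type*} [Group G] (act : Ω → G → Ω) (X Y : Set Ω) : Prop :=
  ∃ (n : ℕ) (P Q : Fin n → Set Ω) (g : Fin n → G),
    (∀ i j, i ≠ j → Disjoint (P i) (P j)) ∧
    (∀ i j, i ≠ j → Disjoint (Q i) (Q j)) ∧
    X = (⋃ i, P i) ∧ Y = (⋃ i, Q i) ∧
    ∀ i, Q i = (fun x => act x (g i)) '' P i

/-- `SO(3)`: the subgroup of the orthogonal group `O(3)` of matrices of determinant `1`. -/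
def SO3 : Subgroup (Matrix.orthogonalGroup (Fin 3) ℝ) where
  carrier := {A | ((A : Matrix (Fin 3) (Fin 3) ℝ)).det = 1}
  one_mem' := by simp
  mul_mem' := by
    intro a b ha hb
    simp only [Set.mem_setOf_eq, Matrix.UnitaryGroup.mul_val, Matrix.det_mul] at *
    rw [ha, hb, mul_one]
  inv_mem' := by
    intro a ha
    simp only [Set.mem_setOf_eq, Matrix.UnitaryGroup.inv_val] at *
    rw [Matrix.star_eq_conjTranspose, Matrix.det_conjTranspose, ha, star_one]

/-- The natural (right) action of `SO(3)` on `ℝ³` by matrix multiplication. -/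
def so3Act (v : Fin 3 → ℝ) (A : SO3) : Fin 3 → ℝ :=
  Matrix.vecMul v (A : Matrix (Fin 3) (Fin 3) ℝ)

/-- The unit sphere `𝕊²` centred at the origin in `ℝ³`. -/
def unitSphere : Set (Fin 3 → ℝ) :=
  {v | v 0 ^ 2 + v 1 ^ 2 + v 2 ^ 2 = 1}

/-!
If a rotation `g` moves `X` off itself under every positive power, then shifting the forward orbit
`D = X ∪ Xg ∪ Xg² ∪ ⋯` by `g` removes exactly `X` from it, so `𝕊² \ X = (𝕊² \ D) ∪ Dg` is
equidecomposable to `(𝕊² \ D) ∪ D = 𝕊²`. To find `g`, choose an axis that misses `X` and project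
along it to `ℂ`: a rotation by `z` carries `x` to `y` in `n` steps only if `p zⁿ = q` for the
projections `p` and `q ≠ 0`. Each such equation has finitely many solutions, so fewer than
continuum many `z` are excluded. The axis itself is found by the same count, with `q = ±1`.
-/

open Cardinal Set
open scoped Pointwise RightActions

universe u

section Equidecomposable

variable {G Ω : Type*} [Group G]

theorem equidecomposable_image (act : Ω → G → Ω) (X : Set Ω) (g : G) :
    Equidecomposable act X ((fun x => act x g) '' X) :=
  ⟨1, fun _ => X, fun _ => (fun x => act x g) '' X, fun _ => g,
    fun i j hij => (hij (Subsingleton.elim i j)).elim,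
    fun i j hij => (hij (Subsingleton.elim i j)).elim,
    (iUnion_const X).symm, (iUnion_const _).symm, fun _ => rfl⟩

theorem pairwise_disjoint_finAppend {m n : ℕ} {P : Fin m → Set Ω} {Q : Fin n → Set Ω}
    (hP : ∀ i j, i ≠ j → Disjoint (P i) (P j)) (hQ : ∀ i j, i ≠ j → Disjoint (Q i) (Q j))
    (hPQ : Disjoint (⋃ i, P i) (⋃ j, Q j)) (i j : Fin (m + n)) (hij : i ≠ j) :
    Disjoint (Fin.append P Q i) (Fin.append P Q j) := by
  have hPQ' (i j) : Disjoint (P i) (Q j) :=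
    hPQ.mono (subset_iUnion P i) (subset_iUnion Q j)
  induction i using Fin.addCases <;> induction j using Fin.addCases <;>
    simp_all [disjoint_comm]

theorem iUnion_finAppend {m n : ℕ} (P : Fin m → Set Ω) (Q : Fin n → Set Ω) :
    ⋃ i, Fin.append P Q i = (⋃ i, P i) ∪ ⋃ j, Q j := by
  rw [← finSumFinEquiv.surjective.iUnion_comp, iUnion_sum]
  simp

theorem Equidecomposable.union {act : Ω → G → Ω} {X X' Y Y' : Set Ω}
    (hX : Equidecomposable act X X') (hY : Equidecomposable act Y Y')
    (hXY : Disjoint X Y) (hXY' : Disjoint X' Y') :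
    Equidecomposable act (X ∪ Y) (X' ∪ Y') := by
  obtain ⟨m, P, P', g, hP, hP', rfl, rfl, hPP'⟩ := hX
  obtain ⟨n, Q, Q', h, hQ, hQ', rfl, rfl, hQQ'⟩ := hY
  refine ⟨m + n, Fin.append P Q, Fin.append P' Q', Fin.append g h,
    pairwise_disjoint_finAppend hP hQ hXY, pairwise_disjoint_finAppend hP' hQ' hXY',
    (iUnion_finAppend P Q).symm, (iUnion_finAppend P' Q').symm, fun i => ?_⟩
  induction i using Fin.addCases with
  | left i => simpa only [Fin.append_left] using hPP' i
  | right j => simpa only [Fin.append_right] using hQQ' j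

theorem equidecomposable_diff_of_disjoint_pow [MulAction Gᵐᵒᵖ Ω] {X S : Set Ω} {g : G}
    (hXS : X ⊆ S) (hS : S <• g ⊆ S) (hg : ∀ n : ℕ, Disjoint (X <• g ^ (n + 1)) X) :
    Equidecomposable (fun (x : Ω) (h : G) => x <• h) (S \ X) S := by
  set D : Set Ω := ⋃ n : ℕ, X <• g ^ n with hD
  have hDg : D <• g = ⋃ n : ℕ, X <• g ^ (n + 1) := by
    simp only [hD, smul_set_iUnion, op_smul_op_smul, pow_succ]
  have hDX : D = X ∪ D <• g := by
    rw [hDg, hD, ← union_iUnion_nat_succ]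
    simp
  have hdisj : Disjoint (D <• g) X := by
    rw [hDg, disjoint_iUnion_left]
    exact hg
  have hDS : D ⊆ S := iUnion_subset fun n => by
    induction n with
    | zero => simpa using hXS
    | succ n ih =>
      rw [pow_succ, op_smul_mul]
      exact (smul_set_mono ih).trans hS
  have hsplit : S \ X = (S \ D) ∪ D <• g := by
    grind
  have hone : Equidecomposable (fun (x : Ω) (h : G) => x <• h) (S \ D) (S \ D) := by
    simpa using equidecomposable_image (fun (x : Ω) (h : G) => x <• h) (S \ D) 1
  have hback : Equidecomposable (fun (x : Ω) (h : G) => x <• h) (D <• g) D := by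
    simpa [image_smul] using equidecomposable_image (fun (x : Ω) (h : G) => x <• h) (D <• g) g⁻¹
  have hDgD : D <• g ⊆ D := subset_union_right.trans_eq hDX.symm
  have hunion := hone.union hback (disjoint_sdiff_left.mono_right hDgD) disjoint_sdiff_left
  rwa [← hsplit, sdiff_union_of_subset hDS] at hunion

end Equidecomposable

section Circle

theorem mk_iUnion_lt_continuum {ι α : Type u} {f : ι → Set α}
    (hι : #ι < 𝔠) (hf : ∀ i, (f i).Countable) : #(⋃ i, f i) < 𝔠 :=
  (mk_iUnion_le f).trans_lt <| mul_lt_of_lt aleph0_le_continuum hι <|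
    (ciSup_le' fun i => (hf i).le_aleph0).trans_lt aleph0_lt_continuum

theorem mk_circle : #Circle = 𝔠 := by
  rw [Circle.argEquiv.cardinal_eq, mk_Ioc_real (by linarith [Real.pi_pos])]

theorem finite_circle_mul_pow_eq (a : ℂ) {b : ℂ} (hb : b ≠ 0) (n : ℕ) :
    {z : Circle | a * (z : ℂ) ^ (n + 1) = b}.Finite := by
  refine ((Polynomial.nthRootsFinset (n + 1) (b / a)).finite_toSet.preimage
    Circle.coe_injective.injOn).subset fun z (hz : a * _ = b) => ?_
  have ha : a ≠ 0 := left_ne_zero_of_mul (hz ▸ hb)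
  simpa [Polynomial.mem_nthRootsFinset n.succ_pos, eq_div_iff ha, mul_comm] using hz

theorem exists_circle_mul_pow_notMem {P Q : Set ℂ} (hP : #P < 𝔠) (hQ : #Q < 𝔠)
    (hQ0 : 0 ∉ Q) : ∃ z : Circle, ∀ n : ℕ, ∀ p ∈ P, p * (z : ℂ) ^ (n + 1) ∉ Q := by
  let solutions (t : ℕ × P × Q) : Set Circle := {z | (t.2.1 : ℂ) * (z : ℂ) ^ (t.1 + 1) = t.2.2}
  have hsolutions : #(⋃ t, solutions t) < #Circle := by
    rw [mk_circle]
    refine mk_iUnion_lt_continuum ?_ fun t =>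
      (finite_circle_mul_pow_eq _ (ne_of_mem_of_not_mem t.2.2.2 hQ0) _).countable
    simpa using mul_lt_of_lt aleph0_le_continuum aleph0_lt_continuum
      (mul_lt_of_lt aleph0_le_continuum hP hQ)
  obtain ⟨z, hz⟩ : ∃ z, z ∉ ⋃ t, solutions t := by
    by_contra! h
    rw [eq_univ_of_forall h, mk_univ] at hsolutions
    exact hsolutions.false
  exact ⟨z, fun n p hp hpq => hz (mem_iUnion.2 ⟨(n, ⟨p, hp⟩, ⟨_, hpq⟩), rfl⟩)⟩

end Circle

section Rotation

/-- Matrix multiplication from the right, as an action of the opposite group of `SO(3)`, so that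
`v <• A` denotes `so3Act v A`. -/
instance : MulAction SO3ᵐᵒᵖ (Fin 3 → ℝ) where
  smul A v := so3Act v A.unop
  one_smul v := by
    change so3Act v 1 = v
    simp [so3Act]
  mul_smul A B v := by
    change so3Act v (B.unop * A.unop) = so3Act (so3Act v B.unop) A.unop
    simp [so3Act, Matrix.vecMul_vecMul]

theorem op_smul_eq_vecMul (v : Fin 3 → ℝ) (A : SO3) :
    v <• A = Matrix.vecMul v (A : Matrix (Fin 3) (Fin 3) ℝ) :=
  rfl

theorem mem_unitSphere_iff_dotProduct_self {v : Fin 3 → ℝ} : v ∈ unitSphere ↔ v ⬝ᵥ v = 1 := by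
  simp [unitSphere, dotProduct, Fin.sum_univ_three, sq]

theorem op_smul_mem_unitSphere {v : Fin 3 → ℝ} (hv : v ∈ unitSphere) (A : SO3) :
    v <• A ∈ unitSphere := by
  have hA : (A : Matrix (Fin 3) (Fin 3) ℝ) * (A : Matrix (Fin 3) (Fin 3) ℝ).transpose = 1 :=
    (Matrix.mem_orthogonalGroup_iff (Fin 3) ℝ).1 A.1.2
  rw [mem_unitSphere_iff_dotProduct_self] at hv ⊢
  rw [op_smul_eq_vecMul, ← Matrix.dotProduct_mulVec, ← Matrix.vecMul_transpose,
    Matrix.vecMul_vecMul, hA, Matrix.vecMul_one, hv]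

/-- The orthogonal projection along the third axis, with the plane of the first two coordinates
identified with `ℂ`: rotations about that axis become multiplications by unit complex numbers. -/
def planar (v : Fin 3 → ℝ) : ℂ :=
  ⟨v 0, v 1⟩

/-- The rotation about the third axis through the argument of `z`; the matrix is the transpose of
the usual one because it acts on row vectors. -/
def rotationZ (z : Circle) : SO3 :=
  have hz : (z : ℂ).re * (z : ℂ).re + (z : ℂ).im * (z : ℂ).im = 1 := z.normSq_coe
  ⟨⟨!![(z : ℂ).re, (z : ℂ).im, 0; -(z : ℂ).im, (z : ℂ).re, 0; 0, 0, 1], by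
    rw [Matrix.mem_orthogonalGroup_iff]
    ext i j
    fin_cases i <;> fin_cases j <;>
      simp [Matrix.mul_apply, Fin.sum_univ_three] <;> linarith⟩, by
    change Matrix.det !![_, _, _; _, _, _; _, _, _] = 1
    simpa [Matrix.det_fin_three] using hz⟩

theorem planar_op_smul_rotationZ (v : Fin 3 → ℝ) (z : Circle) :
    planar (v <• rotationZ z) = planar v * z := by
  rw [op_smul_eq_vecMul]
  apply Complex.ext <;>
    simp [planar, rotationZ, Matrix.vecMul, dotProduct, Fin.sum_univ_three, sub_eq_add_neg]

theorem planar_op_smul_rotationZ_pow (v : Fin 3 → ℝ) (z : Circle) (n : ℕ) :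
    planar (v <• rotationZ z ^ n) = planar v * (z : ℂ) ^ n := by
  induction n with
  | zero => simp
  | succ n ih => rw [pow_succ, op_smul_mul, planar_op_smul_rotationZ, ih, pow_succ, mul_assoc]

/-- The rotation by a third of a turn that permutes the coordinates cyclically, used to exchange
the axis of `rotationZ` for another one. -/
def cyclicRotation : SO3 :=
  ⟨⟨!![0, 0, 1; 1, 0, 0; 0, 1, 0], by
    rw [Matrix.mem_orthogonalGroup_iff]
    ext i j
    fin_cases i <;> fin_cases j <;>
      simp [Matrix.mul_apply, Fin.sum_univ_three]⟩, by
    change Matrix.det !![_, _, _; _, _, _; _, _, _] = 1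
    simp [Matrix.det_fin_three]⟩

theorem op_smul_cyclicRotation (v : Fin 3 → ℝ) : v <• cyclicRotation = ![v 1, v 2, v 0] := by
  rw [op_smul_eq_vecMul]
  ext i
  fin_cases i <;>
    simp [cyclicRotation, Matrix.vecMul, dotProduct, Fin.sum_univ_three]

theorem planar_mem_of_planar_cyclicRotation_eq_zero {v : Fin 3 → ℝ} (hv : v ∈ unitSphere)
    (h : planar (v <• cyclicRotation) = 0) : planar v ∈ ({1, -1} : Set ℂ) := by
  rw [op_smul_cyclicRotation] at h
  obtain ⟨h1, h2⟩ : v 1 = 0 ∧ v 2 = 0 := by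
    simpa [planar, Complex.ext_iff] using h
  have h0 : v 0 = 1 ∨ v 0 = -1 := by
    simpa [unitSphere, h1, h2] using hv
  simpa [planar, Complex.ext_iff, h1] using h0

variable {X : Set (Fin 3 → ℝ)}

theorem exists_planar_op_smul_ne_zero (hX : X ⊆ unitSphere) (hcard : #X < 𝔠) :
    ∃ A : SO3, ∀ x ∈ X, planar (x <• A) ≠ 0 := by
  obtain ⟨z, hz⟩ := exists_circle_mul_pow_notMem (P := planar '' X) (Q := {1, -1})
    (mk_image_le.trans_lt hcard) ((toFinite _).lt_aleph0.trans aleph0_lt_continuum) (by simp)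
  refine ⟨rotationZ z * cyclicRotation, fun x hx h => hz 0 _ (mem_image_of_mem planar hx) ?_⟩
  rw [zero_add, ← planar_op_smul_rotationZ_pow, pow_one]
  rw [op_smul_mul] at h
  exact planar_mem_of_planar_cyclicRotation_eq_zero (op_smul_mem_unitSphere (hX hx) _) h

theorem exists_forall_disjoint_op_pow_smul (hX : X ⊆ unitSphere) (hcard : #X < 𝔠) :
    ∃ g : SO3, ∀ n : ℕ, Disjoint (X <• g ^ (n + 1)) X := by
  obtain ⟨A, hA⟩ := exists_planar_op_smul_ne_zero hX hcard
  have hP : #((fun x => planar (x <• A)) '' X) < 𝔠 := mk_image_le.trans_lt hcard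
  obtain ⟨z, hz⟩ := exists_circle_mul_pow_notMem hP hP (by rintro ⟨x, hx, h⟩; exact hA x hx h)
  refine ⟨A * rotationZ z * A⁻¹, fun n => disjoint_left.2 ?_⟩
  rintro _ ⟨x, hx, rfl⟩ hxg
  refine hz n _ (mem_image_of_mem _ hx) ⟨_, hxg, ?_⟩
  change planar (x <• (A * rotationZ z * A⁻¹) ^ (n + 1) <• A) = planar (x <• A) * _
  rw [conj_pow, op_smul_op_smul, inv_mul_cancel_right, op_smul_mul, planar_op_smul_rotationZ_pow]

end Rotation

theorem sphere_minus_countable_equidecomposable_sphere_general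
    (X : Set (Fin 3 → ℝ)) (hX : #X < 𝔠) :
    Equidecomposable so3Act (unitSphere \ X) unitSphere := by
  obtain ⟨g, hg⟩ := exists_forall_disjoint_op_pow_smul (X := unitSphere ∩ X) inter_subset_left
    ((mk_le_mk_of_subset inter_subset_right).trans_lt hX)
  rw [← sdiff_self_inter]
  refine equidecomposable_diff_of_disjoint_pow inter_subset_left ?_ hg
  rintro _ ⟨v, hv, rfl⟩
  exact op_smul_mem_unitSphere hv g

/-- For every countable subset `X` of the unit sphere `𝕊²`, the set `𝕊² \ X` is
`SO(3)`-equidecomposable to `𝕊²`. -/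
theorem sphere_minus_countable_equidecomposable_sphere
    (X : Set (Fin 3 → ℝ)) (hX : X ⊆ unitSphere) (hXc : X.Countable) :
    Equidecomposable so3Act (unitSphere \ X) unitSphere :=
  sphere_minus_countable_equidecomposable_sphere_general X
    (hXc.le_aleph0.trans_lt aleph0_lt_continuum)
end

section
/- The unit sphere 𝕊² in ℝ³ is SO(3)-paradoxical (Banach–Tarski Paradox for the sphere). -/
/-! Two rotations by `arccos (3 / 5)` about perpendicular axes generate a free group: after scaling
by powers of `5`, a nonempty reduced word becomes an integer matrix whose middle entry is not
divisible by `5`. Only countably many points of the sphere are fixed by some nontrivial word, and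
they all avoid the second axis, so some rotation about that axis has powers that carry this set `D`
off itself forever; shifting the forward orbit of `D` embeds the sphere piecewise into the
complement of `D`. There the free group acts freely, and its self-similarity yields two piecewise
embeddings with disjoint images. By the Schröder–Bernstein argument the first image and its
complement are both equidecomposable with the whole sphere. -/

open Set Function Equidecomp
open scoped Matrix Pointwise

namespace BanachTarski

section Equidecomposition

variable {G X : Type*} [Group G] [MulAction G X] {A B C D E U : Set X} {f g : X → X} {γ : G}

variable (G) in
/-- `f` embeds `A` into `B` by moving finitely many pieces of `A` by elements of `G`; in other words
`A` is `G`-equidecomposable with the subset `f '' A` of `B`. -/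
structure IsDecompEmbedding (f : X → X) (A B : Set X) : Prop where
  mapsTo : MapsTo f A B
  injOn : InjOn f A
  exists_isDecompOn : ∃ S : Finset G, IsDecompOn f A S

theorem IsDecompEmbedding.comp (hg : IsDecompEmbedding G g B C) (hf : IsDecompEmbedding G f A B) :
    IsDecompEmbedding G (g ∘ f) A C := by
  classical
  obtain ⟨T, hT⟩ := hg.exists_isDecompOn
  obtain ⟨S, hS⟩ := hf.exists_isDecompOn
  exact ⟨hg.mapsTo.comp hf.mapsTo, hg.injOn.comp hf.injOn hf.mapsTo,
    T * S, hT.comp hS hf.mapsTo⟩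

theorem IsDecompEmbedding.of_mapsTo (hf : IsDecompEmbedding G f A B) (h : MapsTo f A C) :
    IsDecompEmbedding G f A C :=
  ⟨h, hf.injOn, hf.exists_isDecompOn⟩

theorem isDecompEmbedding_id (h : A ⊆ B) : IsDecompEmbedding G id A B :=
  ⟨h, injOn_id A, {1}, fun x _ => ⟨1, Finset.mem_singleton_self 1, (one_smul G x).symm⟩⟩

theorem IsDecompEmbedding.exists_surjOn (hf : IsDecompEmbedding G f A B)
    (hg : IsDecompEmbedding G g B A) : ∃ k, IsDecompEmbedding G k A B ∧ SurjOn k A B := by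
  classical
  obtain ⟨S, hS⟩ := hf.exists_isDecompOn
  obtain ⟨T, hT⟩ := hg.exists_isDecompOn
  obtain ⟨k, ⟨k_inj, k_surj⟩, hk⟩ := Embedding.schroeder_bernstein_of_rel
    (hf.mapsTo.restrict_inj.2 hf.injOn) (hg.mapsTo.restrict_inj.2 hg.injOn)
    (fun x y => ∃ γ ∈ S ∪ T⁻¹, (y : X) = γ • (x : X))
    (fun x => (hS x x.2).imp fun _ h => ⟨Finset.mem_union_left _ h.1, h.2⟩)
    (fun y => by
      obtain ⟨γ, hγ, h⟩ := hT y y.2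
      refine ⟨γ⁻¹, Finset.mem_union_right _ (Finset.inv_mem_inv hγ), ?_⟩
      rw [MapsTo.val_restrict_apply, h, inv_smul_smul])
  let K : X → X := extend Subtype.val (Subtype.val ∘ k) id
  have K_apply (x : A) : K x = k x := Subtype.val_injective.extend_apply ..
  refine ⟨K, ⟨fun x hx => ?_, fun x hx y hy h => ?_, S ∪ T⁻¹, fun x hx => ?_⟩, fun y hy => ?_⟩
  · exact K_apply ⟨x, hx⟩ ▸ (k ⟨x, hx⟩).2
  · rw [K_apply ⟨x, hx⟩, K_apply ⟨y, hy⟩] at h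
    exact congrArg Subtype.val (k_inj (Subtype.ext h))
  · exact K_apply ⟨x, hx⟩ ▸ hk ⟨x, hx⟩
  · obtain ⟨x, hx⟩ := k_surj ⟨y, hy⟩
    exact ⟨x, x.2, by rw [K_apply, hx]⟩

theorem exists_partition_of_isDecompOn {S : Finset G} (hf : IsDecompOn f A S) :
    ∃ (n : ℕ) (P : Fin n → Set X) (γ : Fin n → G),
      Pairwise (Disjoint on P) ∧ ⋃ i, P i = A ∧ ∀ i, EqOn f (γ i • ·) (P i) := by
  let γ : Fin S.toList.length → G := S.toList.get
  let Q (i) : Set X := {x ∈ A | f x = γ i • x}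
  refine ⟨_, disjointed Q, γ, disjoint_disjointed Q, ?_, fun i x hx => (disjointed_subset Q i hx).2⟩
  rw [iUnion_disjointed]
  refine (iUnion_subset fun i => sep_subset A _).antisymm fun x hx => ?_
  obtain ⟨δ, hδ, h⟩ := hf x hx
  obtain ⟨i, rfl⟩ := List.mem_iff_get.1 (Finset.mem_toList.2 hδ)
  exact mem_iUnion_of_mem i ⟨hx, h⟩

theorem IsDecompEmbedding.exists_pieces (hf : IsDecompEmbedding G f E A) (hA : A ⊆ E) :
    ∃ (n : ℕ) (P : Fin n → Set X) (γ : Fin n → G),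
      Pairwise (Disjoint on P) ∧ ⋃ i, P i = A ∧
      Pairwise (Disjoint on fun i => (γ i • ·) '' P i) ∧ ⋃ i, (γ i • ·) '' P i = E := by
  obtain ⟨k, hk, k_surj⟩ := (isDecompEmbedding_id hA).exists_surjOn hf
  obtain ⟨S, hS⟩ := hk.exists_isDecompOn
  obtain ⟨n, P, γ, P_disj, P_union, P_eq⟩ := exists_partition_of_isDecompOn hS
  have P_subset (i) : P i ⊆ A := P_union ▸ subset_iUnion P i
  have image_P (i) : (γ i • ·) '' P i = k '' P i := (P_eq i).image_eq.symm
  refine ⟨n, P, γ, P_disj, P_union, fun i j hij => ?_, ?_⟩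
  · simp only [onFun, image_P]
    exact (P_disj hij).image hk.injOn (P_subset i) (P_subset j)
  · rw [iUnion_congr image_P, ← image_iUnion, P_union, k_surj.image_eq_of_mapsTo hk.mapsTo]

theorem isParadoxical_of_disjoint_image (hf : IsDecompEmbedding G f E E)
    (hg : IsDecompEmbedding G g E E) (hfg : Disjoint (f '' E) (g '' E)) :
    IsParadoxical (fun x (γ : G) => γ⁻¹ • x) E := by
  have hfE : f '' E ⊆ E := hf.mapsTo.image_subset
  obtain ⟨n, P, γ, P_disj, P_union, γP_disj, γP_union⟩ :=
    (hf.of_mapsTo (mapsTo_image f E)).exists_pieces hfE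
  obtain ⟨m, Q, δ, Q_disj, Q_union, δQ_disj, δQ_union⟩ :=
    (hg.of_mapsTo fun x hx => ⟨hg.mapsTo hx, hfg.notMem_of_mem_right (mem_image_of_mem g hx)⟩
      : IsDecompEmbedding G g E (E \ f '' E)).exists_pieces sdiff_subset
  have hPQ : Disjoint (⋃ i, P i) (⋃ j, Q j) := P_union ▸ Q_union ▸ disjoint_sdiff_right
  have cover : (⋃ i, P i) ∪ ⋃ j, Q j = E := by rw [P_union, Q_union, union_sdiff_cancel hfE]
  refine ⟨n, m, P, Q, fun i => (γ i)⁻¹, fun j => (δ j)⁻¹, ?_⟩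
  simp only [inv_inv]
  exact ⟨fun i => (subset_iUnion P i).trans (subset_union_left.trans_eq cover),
    fun j => (subset_iUnion Q j).trans (subset_union_right.trans_eq cover),
    fun _ _ h => P_disj h, fun _ _ h => Q_disj h,
    fun i j => hPQ.mono (subset_iUnion P i) (subset_iUnion Q j),
    cover.symm, γP_union.symm, δQ_union.symm, fun _ _ h => γP_disj h, fun _ _ h => δQ_disj h⟩

open Classical in
/-- Translation by `γ` on `U` and the identity elsewhere. When `γ • U ⊆ U` it pushes the whole space
off `U \ γ • U`. -/
noncomputable def shiftOn (γ : G) (U : Set X) : X → X := U.piecewise (γ • ·) id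

open Classical in
theorem shiftOn_of_mem {x : X} (hx : x ∈ U) : shiftOn γ U x = γ • x :=
  piecewise_eq_of_mem _ _ _ hx

open Classical in
theorem shiftOn_of_notMem {x : X} (hx : x ∉ U) : shiftOn γ U x = x :=
  piecewise_eq_of_notMem _ _ _ hx

theorem mapsTo_shiftOn (hE : MapsTo (γ • ·) E E) : MapsTo (shiftOn γ U) E E := by
  intro x hx
  by_cases hxU : x ∈ U
  · rw [shiftOn_of_mem hxU]
    exact hE hx
  · rwa [shiftOn_of_notMem hxU]

theorem isDecompEmbedding_shiftOn (hU : MapsTo (γ • ·) U U) (h : MapsTo (shiftOn γ U) A B) :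
    IsDecompEmbedding G (shiftOn γ U) A B := by
  classical
  refine ⟨h, Injective.injOn <| (injective_piecewise_iff _).2
    ⟨(MulAction.injective γ).injOn, injOn_id _, fun x hx y hy => ne_of_mem_of_not_mem (hU hx) hy⟩,
    {1, γ}, fun x _ => ?_⟩
  by_cases hx : x ∈ U
  · exact ⟨γ, by simp, shiftOn_of_mem hx⟩
  · exact ⟨1, by simp, by rw [shiftOn_of_notMem hx, one_smul]⟩

theorem exists_isDecompEmbedding_diff (hE : MapsTo (γ • ·) E E)
    (hD : ∀ n : ℕ, ∀ d ∈ D, γ ^ (n + 1) • d ∉ D) : ∃ f, IsDecompEmbedding G f E (E \ D) := by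
  let U : Set X := {x | ∃ n : ℕ, ∃ d ∈ D, γ ^ n • d = x}
  have D_subset : D ⊆ U := fun d hd => ⟨0, d, hd, by rw [pow_zero, one_smul]⟩
  have smul_mem : ∀ x ∈ U, γ • x ∈ U \ D := by
    rintro _ ⟨n, d, hd, rfl⟩
    rw [smul_smul, ← pow_succ']
    exact ⟨⟨n + 1, d, hd, rfl⟩, hD n d hd⟩
  refine ⟨shiftOn γ U, isDecompEmbedding_shiftOn (fun x hx => (smul_mem x hx).1)
    fun x hx => ⟨mapsTo_shiftOn hE hx, ?_⟩⟩
  by_cases hxU : x ∈ U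
  · rw [shiftOn_of_mem hxU]
    exact (smul_mem x hxU).2
  · rw [shiftOn_of_notMem hxU]
    exact fun h => hxU (D_subset h)

theorem exists_pow_smul_notMem {Z : Type*} [Uncountable Z] (r : Z → G) (hD : D.Countable)
    (h : ∀ n : ℕ, ∀ d ∈ D, ∀ d' ∈ D, {z | r z ^ (n + 1) • d = d'}.Countable) :
    ∃ z, ∀ n : ℕ, ∀ d ∈ D, r z ^ (n + 1) • d ∉ D := by
  have bad_countable : (⋃ n : ℕ, ⋃ d ∈ D, ⋃ d' ∈ D, {z | r z ^ (n + 1) • d = d'}).Countable :=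
    countable_iUnion fun n => hD.biUnion fun d hd => hD.biUnion fun d' hd' => h n d hd d' hd'
  obtain ⟨z, hz⟩ := (ne_univ_iff_exists_notMem _).1 fun h =>
    not_countable_univ (bad_countable.mono h.ge)
  exact ⟨z, fun n d hd hd' => hz <| mem_iUnion_of_mem n <|
    mem_biUnion hd <| mem_biUnion hd' rfl⟩

end Equidecomposition

section FreeAction

variable {G H X : Type*} [Group G] [MulAction G X] [Group H] {E : Set X}

variable (X) in
/-- The points with a nontrivial stabilizer in the group `H`, acting on `X` through `φ`. -/
def nonfreeSet (φ : H →* G) : Set X :=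
  {x | ∃ h ≠ 1, φ h • x = x}

theorem smul_mem_nonfreeSet_iff (φ : H →* G) (h : H) {x : X} :
    φ h • x ∈ nonfreeSet X φ ↔ x ∈ nonfreeSet X φ := by
  have smul_mem (h : H) {x : X} : x ∈ nonfreeSet X φ → φ h • x ∈ nonfreeSet X φ := by
    rintro ⟨k, hk, hkx⟩
    refine ⟨h * k * h⁻¹, fun h_eq => hk (conj_eq_one_iff.1 h_eq), ?_⟩
    rw [smul_smul, ← map_mul, inv_mul_cancel_right, map_mul, mul_smul, hkx]
  refine ⟨fun hx => ?_, smul_mem h⟩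
  simpa only [map_inv, inv_smul_smul] using smul_mem h⁻¹ hx

theorem inter_nonfreeSet_countable [Countable H] (φ : H →* G)
    (h_fixed : ∀ h ≠ 1, {x ∈ E | φ h • x = x}.Countable) : (E ∩ nonfreeSet X φ).Countable :=
  ((to_countable {h : H | h ≠ 1}).biUnion h_fixed).mono <| by
    rintro x ⟨hxE, h, hh, hx⟩
    exact mem_biUnion hh ⟨hxE, hx⟩

theorem exists_equivariant_map [MulAction H X] (h_free : ∀ x ∈ E, ∀ h : H, h • x = x → h = 1) :
    ∃ c : X → H, ∀ h : H, ∀ x ∈ E, c (h • x) = h * c x := by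
  let rep (x : X) : X := (Quotient.mk (MulAction.orbitRel H X) x).out
  have rep_rel (x : X) : ∃ h : H, h • rep x = x :=
    (MulAction.orbitRel H X).symm (Quotient.mk_out (s := MulAction.orbitRel H X) x)
  choose c hc using rep_rel
  refine ⟨c, fun h x hx => ?_⟩
  have rep_smul : rep (h • x) = rep x := congrArg Quotient.out (Quotient.sound ⟨h, rfl⟩)
  have fixes : (h⁻¹ * c (h • x) * (c x)⁻¹) • x = x := by
    rw [mul_smul, inv_smul_eq_iff.2 (hc x).symm, ← rep_smul, mul_smul, hc, inv_smul_smul]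
  rw [← inv_mul_eq_iff_eq_mul, ← mul_inv_eq_one]
  exact h_free x hx _ fixes

theorem exists_disjoint_isDecompEmbedding {ι : Type*} (φ : FreeGroup ι →* G)
    (hE : ∀ h, MapsTo (φ h • ·) E E) (h_free : Disjoint E (nonfreeSet X φ)) :
    ∃ p : ι → X → X, (∀ i, IsDecompEmbedding G (p i) E E) ∧
      Pairwise (Disjoint on fun i => p i '' E) := by
  classical
  let := MulAction.compHom X φ
  obtain ⟨c, hc⟩ := exists_equivariant_map (H := FreeGroup ι) (E := E) fun x hx h hhx =>
    not_not.1 fun h_ne => h_free.notMem_of_mem_left hx ⟨h, h_ne, hhx⟩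
  let U (i : ι) : Set X := {x ∈ E | c x ∉ FreeGroup.startsWith (i, false)}
  let p (i : ι) : X → X := shiftOn (φ (.of i)) (U i)
  have smul_startsWith (i) {x} (hx : x ∈ U i) :
      c (φ (.of i) • x) ∈ FreeGroup.startsWith (i, true) := by
    rw [show φ (.of i) • x = FreeGroup.of i • x from rfl, hc _ x hx.1]
    exact FreeGroup.startsWith_mk_mul (w := (i, true)) _ hx.2
  have mapsTo_U (i) : MapsTo (φ (.of i) • ·) (U i) (U i) := fun x hx =>
    ⟨hE _ hx.1, (FreeGroup.startsWith.disjoint_iff_ne.2 (by simp)).notMem_of_mem_left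
      (smul_startsWith i hx)⟩
  have shift_startsWith (i) {x} (hx : x ∈ E) :
      ∃ b, c (p i x) ∈ FreeGroup.startsWith (i, b) := by
    by_cases hxU : x ∈ U i
    · refine ⟨true, ?_⟩
      rw [show p i x = _ from shiftOn_of_mem hxU]
      exact smul_startsWith i hxU
    · refine ⟨false, ?_⟩
      rw [show p i x = x from shiftOn_of_notMem hxU]
      exact not_not.1 fun h => hxU ⟨hx, h⟩
  refine ⟨p, fun i => isDecompEmbedding_shiftOn (mapsTo_U i) (mapsTo_shiftOn (hE _)),
    fun i j hij => ?_⟩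
  rw [onFun, disjoint_left]
  rintro _ ⟨x, hx, rfl⟩ ⟨y, hy, hxy⟩
  obtain ⟨a, ha⟩ := shift_startsWith i hx
  obtain ⟨b, hb⟩ := shift_startsWith j hy
  have startsWith_disj : Disjoint (FreeGroup.startsWith (i, a)) (FreeGroup.startsWith (j, b)) :=
    FreeGroup.startsWith.disjoint_iff_ne.2 fun h => hij (congrArg Prod.fst h)
  exact startsWith_disj.notMem_of_mem_left ha ((hxy : p j y = p i x) ▸ hb)

end FreeAction

section Sphere

variable {v x y : Fin 3 → ℝ} {A : SO3}

/-- Rotations act on the left by `A *ᵥ v`; `so3Act` is the right action by inverses. -/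
instance : MulAction SO3 (Fin 3 → ℝ) :=
  inferInstanceAs (MulAction SO3.toSubmonoid (Fin 3 → ℝ))

-- Without this shortcut, instance search gets lost in the pointwise actions on functions.
instance : SMul SO3 (Fin 3 → ℝ) := SemigroupAction.toSMul

theorem smul_eq_mulVec (A : SO3) (v : Fin 3 → ℝ) :
    A • v = (A : Matrix (Fin 3) (Fin 3) ℝ) *ᵥ v := rfl

theorem det_eq_one (A : SO3) : (A : Matrix (Fin 3) (Fin 3) ℝ).det = 1 := A.2

theorem so3Act_eq_inv_smul : so3Act = fun v A => A⁻¹ • v :=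
  funext₂ fun v A => (Matrix.mulVec_transpose (A : Matrix (Fin 3) (Fin 3) ℝ) v).symm

theorem smul_dotProduct_smul (A : SO3) (v w : Fin 3 → ℝ) : (A • v) ⬝ᵥ (A • w) = v ⬝ᵥ w := by
  have transpose_mul_self : (A : Matrix (Fin 3) (Fin 3) ℝ)ᵀ * A = 1 :=
    (Matrix.mem_orthogonalGroup_iff' (Fin 3) ℝ).1 A.1.2
  rw [smul_eq_mulVec, smul_eq_mulVec, Matrix.dotProduct_mulVec, Matrix.vecMul_mulVec,
    transpose_mul_self, Matrix.vecMul_one]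

theorem of_smul_eq_mul_transpose (A : SO3) (u v w : Fin 3 → ℝ) :
    Matrix.of ![A • u, A • v, A • w] =
      Matrix.of ![u, v, w] * (A : Matrix (Fin 3) (Fin 3) ℝ)ᵀ := by
  ext i j
  fin_cases i <;> simp [Matrix.mul_apply, smul_eq_mulVec, Matrix.mulVec, dotProduct, mul_comm]

theorem smul_crossProduct (A : SO3) (v w : Fin 3 → ℝ) : A • (v ⨯₃ w) = (A • v) ⨯₃ (A • w) := by
  have triple_product (u : Fin 3 → ℝ) : (A • u) ⬝ᵥ (A • v) ⨯₃ (A • w) = u ⬝ᵥ v ⨯₃ w := by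
    have det_smul : (Matrix.of ![A • u, A • v, A • w]).det = (Matrix.of ![u, v, w]).det := by
      rw [of_smul_eq_mul_transpose, Matrix.det_mul, Matrix.det_transpose, det_eq_one, mul_one]
    rw [triple_product_eq_det, triple_product_eq_det]
    exact det_smul
  refine dotProduct_eq _ _ fun u => ?_
  rw [dotProduct_comm, dotProduct_comm _ u, ← smul_inv_smul A u, smul_dotProduct_smul,
    triple_product]

theorem eq_one_of_linearIndependent (h : LinearIndependent ℝ ![x, y]) (hx : A • x = x)
    (hy : A • y = y) : A = 1 := by
  let M : Matrix (Fin 3) (Fin 3) ℝ := Matrix.of ![x, y, x ⨯₃ y]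
  have det_M : M.det ≠ 0 := by
    rw [show M.det = x ⬝ᵥ y ⨯₃ (x ⨯₃ y) from (triple_product_eq_det ..).symm,
      triple_product_permutation, triple_product_permutation]
    exact dotProduct_self_eq_zero.not.2 (crossProduct_ne_zero_iff_linearIndependent.2 h)
  have fixes : M * (A : Matrix (Fin 3) (Fin 3) ℝ)ᵀ = M * 1 := by
    rw [← of_smul_eq_mul_transpose, smul_crossProduct, hx, hy, mul_one]
  have transpose_eq_one : (A : Matrix (Fin 3) (Fin 3) ℝ)ᵀ = 1 :=
    ((Matrix.isUnit_iff_isUnit_det M).2 det_M.isUnit).mul_left_cancel fixes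
  exact Subtype.ext (Subtype.ext (Matrix.transpose_eq_one.1 transpose_eq_one))

theorem mem_unitSphere_iff : v ∈ unitSphere ↔ v ⬝ᵥ v = 1 := by
  simp only [unitSphere, mem_ofPred_eq, dotProduct, Fin.sum_univ_three, sq]

theorem ne_zero_of_mem_unitSphere (hv : v ∈ unitSphere) : v ≠ 0 := by
  rintro rfl
  simp [mem_unitSphere_iff] at hv

theorem mapsTo_smul_unitSphere (A : SO3) : MapsTo (A • ·) unitSphere unitSphere := fun v hv =>
  mem_unitSphere_iff.2 ((smul_dotProduct_smul A v v).trans (mem_unitSphere_iff.1 hv))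

theorem fixedPoints_unitSphere_finite (hA : A ≠ 1) : {x ∈ unitSphere | A • x = x}.Finite := by
  obtain h_empty | ⟨x, hx, hAx⟩ := eq_empty_or_nonempty {x ∈ unitSphere | A • x = x}
  · exact h_empty ▸ finite_empty
  refine (toFinite {x, -x}).subset fun y ⟨hy, hAy⟩ => ?_
  have dependent : ¬LinearIndependent ℝ ![x, y] := fun h =>
    hA (eq_one_of_linearIndependent h hAx hAy)
  obtain ⟨a, rfl⟩ : ∃ a : ℝ, a • x = y := by
    simpa only [LinearIndependent.pair_iff' (ne_zero_of_mem_unitSphere hx), not_forall, not_not]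
      using dependent
  have a_sq : a * a = 1 := by
    rw [mem_unitSphere_iff] at hx
    simpa only [mem_unitSphere_iff, smul_dotProduct, dotProduct_smul, hx, smul_eq_mul, mul_one]
      using hy
  obtain rfl | rfl := mul_self_eq_one_iff.1 a_sq <;> simp

end Sphere

section FreeRotations

/-- Five times the matrix of a rotation by `arccos (3 / 5)`, about the third axis for `true` and
about the first axis for `false`. -/
def axisMatrix : Bool → Matrix (Fin 3) (Fin 3) ℤ
  | true => !![3, -4, 0; 4, 3, 0; 0, 0, 5]
  | false => !![5, 0, 0; 0, 3, -4; 0, 4, 3]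

theorem axisMatrix_mul_transpose (i : Bool) : axisMatrix i * (axisMatrix i)ᵀ = 25 := by
  cases i <;> decide

theorem det_axisMatrix (i : Bool) : (axisMatrix i).det = 125 := by
  cases i <;> decide

/-- The rotation with matrix `axisMatrix i / 5`. -/
noncomputable def generator (i : Bool) : SO3 where
  val := ⟨(5 : ℝ)⁻¹ • (Int.castRingHom ℝ).mapMatrix (axisMatrix i), by
    have map_mul_transpose : (Int.castRingHom ℝ).mapMatrix (axisMatrix i) *
        ((Int.castRingHom ℝ).mapMatrix (axisMatrix i))ᵀ = (25 : ℝ) • 1 := by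
      rw [RingHom.mapMatrix_apply, ← Matrix.transpose_map, ← Matrix.map_mul,
        axisMatrix_mul_transpose, ← RingHom.mapMatrix_apply, map_ofNat,
        ← Algebra.algebraMap_eq_smul_one, map_ofNat]
    rw [Matrix.mem_orthogonalGroup_iff, Matrix.transpose_smul, Matrix.smul_mul, Matrix.mul_smul,
      map_mul_transpose, smul_smul, smul_smul]
    norm_num⟩
  property := by
    change ((5 : ℝ)⁻¹ • (Int.castRingHom ℝ).mapMatrix (axisMatrix i)).det = 1
    rw [Matrix.det_smul, ← RingHom.map_det, det_axisMatrix]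
    norm_num

/-- Five times the matrix of the rotation represented by a letter of a word in `FreeGroup Bool`. -/
def letterMatrix (s : Bool × Bool) : Matrix (Fin 3) (Fin 3) ℤ :=
  cond s.2 (axisMatrix s.1) (axisMatrix s.1)ᵀ

theorem five_smul_lift_generator_letter (s : Bool × Bool) :
    (5 : ℝ) • ((FreeGroup.lift generator (.mk [s]) : SO3) : Matrix (Fin 3) (Fin 3) ℝ) =
      (Int.castRingHom ℝ).mapMatrix (letterMatrix s) := by
  have five_smul (i : Bool) : (5 : ℝ) • ((generator i : SO3) : Matrix (Fin 3) (Fin 3) ℝ) =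
      (Int.castRingHom ℝ).mapMatrix (axisMatrix i) :=
    smul_inv_smul₀ (by norm_num) _
  obtain ⟨i, _ | _⟩ := s
  · rw [letterMatrix, cond_false, RingHom.mapMatrix_apply, Matrix.transpose_map,
      ← RingHom.mapMatrix_apply, ← five_smul, Matrix.transpose_smul, FreeGroup.lift_mk,
      List.map_singleton, List.prod_singleton, cond_false]
    rfl
  · rw [letterMatrix, cond_true, ← five_smul, FreeGroup.lift_mk, List.map_singleton,
      List.prod_singleton, cond_true]

/-- The product of the letter matrices of a word. -/
def wordMatrix (L : List (Bool × Bool)) : Matrix (Fin 3) (Fin 3) ℤ :=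
  (L.map letterMatrix).prod

theorem pow_smul_lift_generator_mk (L : List (Bool × Bool)) :
    (5 : ℝ) ^ L.length • ((FreeGroup.lift generator (.mk L) : SO3) : Matrix (Fin 3) (Fin 3) ℝ) =
      (Int.castRingHom ℝ).mapMatrix (wordMatrix L) := by
  induction L with
  | nil => simp [wordMatrix, ← FreeGroup.one_eq_mk]
  | cons s L ih =>
    have mk_cons : FreeGroup.mk (s :: L) = .mk [s] * .mk L :=
      (FreeGroup.mul_mk (L₁ := [s])).symm
    rw [mk_cons, map_mul, wordMatrix, List.map_cons, List.prod_cons, ← wordMatrix, map_mul, ← ih,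
      ← five_smul_lift_generator_letter, List.length_cons, pow_succ', Matrix.smul_mul,
      Matrix.mul_smul, smul_smul]
    rfl

/-- A vector spanning the range of `letterMatrix s` modulo `5`. -/
def letterVec : Bool × Bool → Fin 3 → ZMod 5
  | (true, true) => ![2, 1, 0]
  | (true, false) => ![3, 1, 0]
  | (false, true) => ![0, 1, 3]
  | (false, false) => ![0, 1, 2]

theorem letterVec_apply_one (s : Bool × Bool) : letterVec s 1 = 1 := by
  decide +revert

theorem letterMatrix_mulVec_single (s : Bool × Bool) :
    (Int.castRingHom (ZMod 5)).mapMatrix (letterMatrix s) *ᵥ Pi.single 1 1 =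
      (3 : ZMod 5) • letterVec s := by
  decide +revert

theorem letterMatrix_mulVec_letterVec {s t : Bool × Bool} (h : s.1 = t.1 → s.2 = t.2) :
    ∃ c : ZMod 5, c ≠ 0 ∧
      (Int.castRingHom (ZMod 5)).mapMatrix (letterMatrix s) *ᵥ letterVec t = c • letterVec s := by
  decide +revert

theorem wordMatrix_mulVec_single {s : Bool × Bool} {L : List (Bool × Bool)}
    (h : FreeGroup.IsReduced (s :: L)) : ∃ c : ZMod 5, c ≠ 0 ∧
      (Int.castRingHom (ZMod 5)).mapMatrix (wordMatrix (s :: L)) *ᵥ Pi.single 1 1 =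
        c • letterVec s := by
  induction L generalizing s with
  | nil =>
    refine ⟨3, by decide, ?_⟩
    rw [wordMatrix, List.map_singleton, List.prod_singleton, letterMatrix_mulVec_single]
  | cons t L ih =>
    obtain ⟨hst, hL⟩ := FreeGroup.isReduced_cons_cons.1 h
    obtain ⟨c, hc, c_eq⟩ := ih hL
    obtain ⟨d, hd, d_eq⟩ := letterMatrix_mulVec_letterVec hst
    have : Fact (Nat.Prime 5) := ⟨by norm_num⟩
    refine ⟨c * d, mul_ne_zero hc hd, ?_⟩
    rw [wordMatrix, List.map_cons, List.prod_cons, ← wordMatrix, map_mul, ← Matrix.mulVec_mulVec,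
      c_eq, Matrix.mulVec_smul, d_eq, smul_smul]

theorem not_five_dvd_wordMatrix_apply_one_one {s : Bool × Bool} {L : List (Bool × Bool)}
    (h : FreeGroup.IsReduced (s :: L)) : ¬(5 : ℤ) ∣ wordMatrix (s :: L) 1 1 := by
  obtain ⟨c, hc, c_eq⟩ := wordMatrix_mulVec_single h
  have entry_eq : (wordMatrix (s :: L) 1 1 : ZMod 5) = c := by
    have := congrFun c_eq 1
    rwa [Matrix.mulVec_single_one, Pi.smul_apply, letterVec_apply_one, smul_eq_mul, mul_one] at this
  rwa [← Nat.cast_ofNat, ← ZMod.intCast_zmod_eq_zero_iff_dvd, entry_eq]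

theorem lift_generator_smul_single_ne {w : FreeGroup Bool} (hw : w ≠ 1) :
    FreeGroup.lift generator w • Pi.single 1 1 ≠ (Pi.single 1 1 : Fin 3 → ℝ) := by
  intro h_fixed
  obtain ⟨s, L, h_word⟩ := List.exists_cons_of_ne_nil (FreeGroup.toWord_eq_nil_iff.not.2 hw)
  have entry_eq_one : ((FreeGroup.lift generator w : SO3) : Matrix (Fin 3) (Fin 3) ℝ) 1 1 = 1 := by
    rw [smul_eq_mulVec, Matrix.mulVec_single_one] at h_fixed
    exact (congrFun h_fixed 1).trans (Pi.single_eq_same 1 1)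
  have entry_eq_pow : wordMatrix (s :: L) 1 1 = 5 ^ (s :: L).length := by
    have : _ = (wordMatrix (s :: L) 1 1 : ℝ) :=
      congrFun₂ (pow_smul_lift_generator_mk (s :: L)) 1 1
    rw [← h_word, FreeGroup.mk_toWord, Matrix.smul_apply, entry_eq_one, smul_eq_mul,
      mul_one] at this
    rw [← h_word]
    exact_mod_cast this.symm
  refine not_five_dvd_wordMatrix_apply_one_one (h_word ▸ FreeGroup.isReduced_toWord) ?_
  rw [entry_eq_pow]
  exact dvd_pow_self 5 (List.length_pos_of_ne_nil (List.cons_ne_nil s L)).ne'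

theorem lift_generator_ne_one {w : FreeGroup Bool} (hw : w ≠ 1) : FreeGroup.lift generator w ≠ 1 :=
  fun h => lift_generator_smul_single_ne hw (by rw [h, one_smul])

end FreeRotations

section AxialRotations

theorem circle_re_mul_re_add_im_mul_im (z : Circle) :
    (z : ℂ).re * (z : ℂ).re + (z : ℂ).im * (z : ℂ).im = 1 :=
  z.normSq_coe

/-- The rotation about the second coordinate axis through the argument of `z`. -/
def axialRotation (z : Circle) : SO3 where
  val := ⟨!![(z : ℂ).re, 0, -(z : ℂ).im; 0, 1, 0; (z : ℂ).im, 0, (z : ℂ).re], by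
    have sq_add_sq := circle_re_mul_re_add_im_mul_im z
    rw [Matrix.mem_orthogonalGroup_iff]
    ext i j
    fin_cases i <;> fin_cases j <;>
      simp [Matrix.mul_apply, Fin.sum_univ_three] <;> grind⟩
  property := by
    simpa [SO3, Matrix.det_fin_three] using circle_re_mul_re_add_im_mul_im z

/-- The projection of `ℝ³` along the second coordinate axis onto the orthogonal plane, identified
with `ℂ`. -/
def planarPart (v : Fin 3 → ℝ) : ℂ := ⟨v 0, v 2⟩

theorem planarPart_axialRotation_smul (z : Circle) (v : Fin 3 → ℝ) :
    planarPart (axialRotation z • v) = z * planarPart v := by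
  rw [smul_eq_mulVec]
  apply Complex.ext <;>
    simp [planarPart, axialRotation, Matrix.mulVec, dotProduct, Fin.sum_univ_three] <;> ring

theorem planarPart_axialRotation_pow_smul (z : Circle) (n : ℕ) (v : Fin 3 → ℝ) :
    planarPart (axialRotation z ^ n • v) = (z : ℂ) ^ n * planarPart v := by
  induction n with
  | zero => rw [pow_zero, pow_zero, one_smul, one_mul]
  | succ n ih => rw [pow_succ', mul_smul, planarPart_axialRotation_smul, ih, pow_succ', mul_assoc]

instance : Uncountable Circle := by
  rw [← Cardinal.aleph0_lt_mk_iff, Circle.argEquiv.cardinal_eq,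
    Cardinal.mk_Ioc_real (neg_lt_self Real.pi_pos)]
  exact Cardinal.aleph0_lt_continuum

theorem finite_setOf_axialRotation_pow_smul_eq {v : Fin 3 → ℝ} (hv : planarPart v ≠ 0) (n : ℕ)
    (w : Fin 3 → ℝ) : {z | axialRotation z ^ (n + 1) • v = w}.Finite := by
  have roots_finite : {a : ℂ | a ^ (n + 1) = planarPart w / planarPart v}.Finite :=
    (Polynomial.nthRootsFinset (n + 1) (planarPart w / planarPart v)).finite_toSet.subset
      fun a ha => (Polynomial.mem_nthRootsFinset n.succ_pos _).2 ha
  refine (roots_finite.preimage Circle.coe_injective.injOn).subset fun z hz => ?_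
  exact (eq_div_iff hv).2
    ((planarPart_axialRotation_pow_smul z (n + 1) v).symm.trans (congrArg planarPart hz))

theorem planarPart_ne_zero_of_mem_nonfreeSet {v : Fin 3 → ℝ} (hv : v ≠ 0)
    (hv_fixed : v ∈ nonfreeSet (Fin 3 → ℝ) (FreeGroup.lift generator)) : planarPart v ≠ 0 := by
  intro h_zero
  obtain ⟨w, hw, h_fixed⟩ := hv_fixed
  have v_eq : v = v 1 • Pi.single 1 1 := by
    obtain ⟨h₀, h₂⟩ := Complex.ext_iff.1 h_zero
    ext i
    fin_cases i
    · simpa [planarPart] using h₀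
    · simp
    · simpa [planarPart] using h₂
  have v_one_ne_zero : v 1 ≠ 0 := fun h => hv (by rw [v_eq, h, zero_smul])
  rw [v_eq, smul_eq_mulVec, Matrix.mulVec_smul] at h_fixed
  exact lift_generator_smul_single_ne hw (smul_right_injective _ v_one_ne_zero h_fixed)

end AxialRotations

end BanachTarski

open BanachTarski

/-- Banach–Tarski Paradox for the sphere: the unit sphere `𝕊²` in `ℝ³` is
`SO(3)`-paradoxical. -/
theorem banach_tarski_sphere : IsParadoxical so3Act unitSphere := by
  let φ : FreeGroup Bool →* SO3 := FreeGroup.lift generator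
  let D : Set (Fin 3 → ℝ) := unitSphere ∩ nonfreeSet (Fin 3 → ℝ) φ
  have D_countable : D.Countable := inter_nonfreeSet_countable φ fun w hw =>
    (fixedPoints_unitSphere_finite (lift_generator_ne_one hw)).countable
  obtain ⟨z, hz⟩ := exists_pow_smul_notMem axialRotation D_countable fun n d hd d' _ =>
    (finite_setOf_axialRotation_pow_smul_eq (planarPart_ne_zero_of_mem_nonfreeSet
      (ne_zero_of_mem_unitSphere hd.1) hd.2) n d').countable
  obtain ⟨f, hf⟩ := exists_isDecompEmbedding_diff (mapsTo_smul_unitSphere (axialRotation z)) hz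
  obtain ⟨p, hp, p_disj⟩ := exists_disjoint_isDecompEmbedding (E := unitSphere \ D) φ
    (fun w x hx => ⟨mapsTo_smul_unitSphere (φ w) hx.1,
      fun h => hx.2 ⟨hx.1, (smul_mem_nonfreeSet_iff φ w).1 h.2⟩⟩)
    (disjoint_left.2 fun x hx h => hx.2 ⟨hx.1, h⟩)
  have embed (i) : IsDecompEmbedding SO3 (p i ∘ f) unitSphere unitSphere :=
    (isDecompEmbedding_id sdiff_subset).comp ((hp i).comp hf)
  rw [so3Act_eq_inv_smul]
  refine isParadoxical_of_disjoint_image (embed true) (embed false) ?_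
  rw [image_comp, image_comp]
  exact (p_disj (by decide : true ≠ false)).mono (image_mono hf.mapsTo.image_subset)
    (image_mono hf.mapsTo.image_subset)
end

section
/- If a group G does not satisfy the Følner condition, then G is paradoxical. Equivalently, if G is non-paradoxical then G satisfies the Følner condition. -/
open scoped Classical

/-- A group `G` is paradoxical: there are pairwise disjoint subsets `X₁,…,Xₙ, Y₁,…,Yₘ`
of `G` and elements `g₁,…,gₙ, h₁,…,hₘ` such that
`G = (⨆ Xᵢ) ⊔ (⨆ Yⱼ) = ⨆ Xᵢgᵢ = ⨆ Yⱼhⱼ`, all indicated unions being disjoint. -/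
def IsParadoxicalGroup (G : Type*) [Group G] : Prop :=
  ∃ (n m : ℕ) (X : Fin n → Set G) (Y : Fin m → Set G) (g : Fin n → G) (h : Fin m → G),
    (∀ i j, i ≠ j → Disjoint (X i) (X j)) ∧
    (∀ i j, i ≠ j → Disjoint (Y i) (Y j)) ∧
    (∀ i j, Disjoint (X i) (Y j)) ∧
    ((⋃ i, X i) ∪ ⋃ j, Y j) = Set.univ ∧
    (⋃ i, (· * g i) '' X i) = Set.univ ∧
    (⋃ j, (· * h j) '' Y j) = Set.univ ∧
    (∀ i j, i ≠ j → Disjoint ((· * g i) '' X i) ((· * g j) '' X j)) ∧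
    (∀ i j, i ≠ j → Disjoint ((· * h i) '' Y i) ((· * h j) '' Y j))

/-!
If the Følner condition fails for `X` and `ε`, then right multiplication by `insert 1 X` enlarges
every finite set by the factor `1 + ε`; iterating, right multiplication by some finite `T ∋ 1` at
least doubles every finite set. Hall's marriage theorem then yields an injection
`f : G × Bool → G` moving points by right translations from `T`, which Schröder–Bernstein turns into
a bijection. Cutting the image of each copy of `G` according to the translation used gives a
paradoxical decomposition.
-/

open Function Finset

section Expansion

open scoped Pointwise

variable {M : Type*} [DecidableEq M]

/-- A finite set `S` is `c`-expanding if right multiplication by `S` enlarges every finite set by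
a factor of at least `c`. For `c > 1` this is a uniform failure of the Følner condition. -/
def IsExpanding [Mul M] (c : ℝ) (S : Finset M) : Prop :=
  ∀ F : Finset M, c * #F ≤ #(F * S)

theorem IsExpanding.mono [Mul M] {c d : ℝ} {S : Finset M} (hS : IsExpanding d S) (hcd : c ≤ d) :
    IsExpanding c S := fun F =>
  (mul_le_mul_of_nonneg_right hcd (Nat.cast_nonneg _)).trans (hS F)

theorem IsExpanding.pow [Monoid M] {c : ℝ} {S : Finset M} (hS : IsExpanding c S) (hc : 0 ≤ c)
    (k : ℕ) : IsExpanding (c ^ k) (S ^ k) := by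
  intro F
  induction k with
  | zero => simp
  | succ k ih =>
    calc c ^ (k + 1) * #F = c * (c ^ k * #F) := by rw [pow_succ', mul_assoc]
      _ ≤ c * #(F * S ^ k) := mul_le_mul_of_nonneg_left ih hc
      _ ≤ #(F * S ^ k * S) := hS _
      _ = #(F * S ^ (k + 1)) := by rw [pow_succ, mul_assoc]

theorem card_sdiff_image_mul_right_add_card_le [MulOneClass M] [IsRightCancelMul M]
    {S : Finset M} {g : M} (h_one : 1 ∈ S) (hg : g ∈ S) (F : Finset M) :
    #(F \ F.image (· * g)) + #F ≤ #(F * S) :=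
  calc #(F \ F.image (· * g)) + #F
      = #(F \ F.image (· * g)) + #(F.image (· * g)) := by
        rw [card_image_of_injective F (mul_left_injective g)]
    _ = #(F ∪ F.image (· * g)) := card_sdiff_add_card _ _
    _ ≤ #(F * S) := card_le_card <| union_subset (subset_mul_left F h_one) <|
        image_subset_iff.2 fun _ hx => mul_mem_mul hx hg

end Expansion

section NotFolner

open scoped Pointwise

variable {G : Type*} [Group G]

theorem exists_one_lt_isExpanding_of_not_folnerCondition (h : ¬ FolnerCondition G) :
    ∃ c > 1, ∃ S : Finset G, 1 ∈ S ∧ IsExpanding c S := by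
  unfold FolnerCondition at h
  push Not at h
  obtain ⟨X, ε, hε, hX⟩ := h
  refine ⟨1 + ε, by linarith, insert 1 X, mem_insert_self 1 X, fun F => ?_⟩
  rcases F.eq_empty_or_nonempty with rfl | hF
  · simp
  obtain ⟨g, hg, hle⟩ := hX F hF
  have h_boundary : ε * #F ≤ #(F \ F.image (· * g)) :=
    (le_div_iff₀ (Nat.cast_pos.2 hF.card_pos)).1 hle
  have h_card : (#(F \ F.image (· * g)) + #F : ℝ) ≤ #(F * insert 1 X) := mod_cast
    card_sdiff_image_mul_right_add_card_le (mem_insert_self 1 X) (mem_insert_of_mem hg) F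
  linarith

theorem exists_isExpanding_of_not_folnerCondition (h : ¬ FolnerCondition G) (c : ℝ) :
    ∃ T : Finset G, 1 ∈ T ∧ IsExpanding c T := by
  obtain ⟨d, hd, S, h_one, hS⟩ := exists_one_lt_isExpanding_of_not_folnerCondition h
  obtain ⟨k, hk⟩ := pow_unbounded_of_one_lt c hd
  exact ⟨S ^ k, one_mem_pow h_one, (hS.pow (by linarith) k).mono hk.le⟩

end NotFolner

section Matching

variable {α β ι : Type*} [Fintype ι]

theorem exists_injective_prod_forall_mem [DecidableEq β] (A : α → Finset β)
    (hA : ∀ s : Finset α, Fintype.card ι * #s ≤ #(s.biUnion A)) :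
    ∃ f : α × ι → β, Injective f ∧ ∀ p, f p ∈ A p.1 := by
  refine (all_card_le_biUnion_card_iff_exists_injective fun p : α × ι => A p.1).1 fun s => ?_
  have h_sub : s ⊆ s.image Prod.fst ×ˢ univ := fun p hp =>
    mem_product.2 ⟨mem_image_of_mem _ hp, mem_univ _⟩
  calc #s ≤ #(s.image Prod.fst ×ˢ (univ : Finset ι)) := card_le_card h_sub
    _ = Fintype.card ι * #(s.image Prod.fst) := by rw [card_product, card_univ, mul_comm]
    _ ≤ #((s.image Prod.fst).biUnion A) := hA _
    _ = #(s.biUnion fun p => A p.1) := by rw [image_biUnion]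

theorem exists_bijective_prod_forall_mem [DecidableEq α] [Nonempty ι] (A : α → Finset α)
    (h_self : ∀ a, a ∈ A a) (hA : ∀ s : Finset α, Fintype.card ι * #s ≤ #(s.biUnion A)) :
    ∃ f : α × ι → α, Bijective f ∧ ∀ p, f p ∈ A p.1 := by
  obtain ⟨f, hf, hfA⟩ := exists_injective_prod_forall_mem (ι := ι) A hA
  exact Embedding.schroeder_bernstein_of_rel hf (Prod.mk_left_injective (Classical.arbitrary ι))
    (fun p y => y ∈ A p.1) hfA h_self

end Matching

theorem isCompl_range_of_bijective_prod_bool {α β : Type*} {f : α × Bool → β} (hf : Bijective f) :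
    IsCompl (Set.range fun x => f (x, false)) (Set.range fun x => f (x, true)) := by
  constructor
  · rw [Set.disjoint_range_iff]
    intro x y hxy
    exact Bool.false_ne_true (congrArg Prod.snd (hf.injective hxy))
  · refine codisjoint_iff.2 (Set.eq_univ_of_forall fun y => ?_)
    obtain ⟨⟨x, _ | _⟩, rfl⟩ := hf.surjective y
    · exact Or.inl ⟨x, rfl⟩
    · exact Or.inr ⟨x, rfl⟩

section Displacement

variable {G : Type*} [Group G]

/-- The element by which `a` right-translates the point `x`. Maps whose displacement takes finitely
many values are the piecewise right translations. -/
def displacement (a : G → G) (x : G) : G := x⁻¹ * a x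

open scoped Pointwise in
theorem IsExpanding.exists_bijective_displacement_mem [DecidableEq G] {ι : Type*} [Fintype ι]
    [Nonempty ι] {T : Finset G} (hT : IsExpanding (Fintype.card ι) T) (h_one : 1 ∈ T) :
    ∃ f : G × ι → G, Bijective f ∧ ∀ i x, displacement (fun y => f (y, i)) x ∈ T := by
  obtain ⟨f, hf, hfT⟩ := exists_bijective_prod_forall_mem (ι := ι) (fun x : G => x • T)
    (fun x => mem_smul_finset.2 ⟨1, h_one, mul_one x⟩)
    (fun F => by rw [biUnion_smul_finset]; exact_mod_cast hT F)
  exact ⟨f, hf, fun i x => inv_smul_mem_iff.2 (hfT (x, i))⟩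

theorem image_mul_inv_image_displacement_fiber (a : G → G) (t : G) :
    (· * t⁻¹) '' (a '' (displacement a ⁻¹' {t})) = displacement a ⁻¹' {t} := by
  rw [Set.image_image]
  refine Set.EqOn.image_eq_self ?_
  rintro x rfl
  simp [displacement]

theorem exists_pieces_of_finite_range_displacement {a : G → G} (ha : Injective a)
    (h_fin : (Set.range (displacement a)).Finite) :
    ∃ (n : ℕ) (X : Fin n → Set G) (g : Fin n → G),
      (∀ i j, i ≠ j → Disjoint (X i) (X j)) ∧
      ⋃ i, X i = Set.range a ∧
      ⋃ i, (· * g i) '' X i = Set.univ ∧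
      ∀ i j, i ≠ j → Disjoint ((· * g i) '' X i) ((· * g j) '' X j) := by
  obtain ⟨n, t, ht, h_range⟩ := h_fin.fin_param
  have h_disj : ∀ i j, i ≠ j →
      Disjoint (displacement a ⁻¹' {t i}) (displacement a ⁻¹' {t j}) := fun i j hij =>
    (Set.disjoint_singleton.2 (ht.ne hij)).preimage _
  have h_cover : ⋃ i, displacement a ⁻¹' {t i} = Set.univ := by
    rw [← Set.preimage_iUnion, Set.iUnion_singleton_eq_range, h_range, Set.preimage_range]
  refine ⟨n, fun i => a '' (displacement a ⁻¹' {t i}), fun i => (t i)⁻¹,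
    fun i j hij => (Set.disjoint_image_iff ha).2 (h_disj i j hij), ?_, ?_, ?_⟩
  · rw [← Set.image_iUnion, h_cover, Set.image_univ]
  · simpa only [image_mul_inv_image_displacement_fiber] using h_cover
  · simpa only [image_mul_inv_image_displacement_fiber] using h_disj

theorem isParadoxicalGroup_of_isCompl_range {a b : G → G} (ha : Injective a) (hb : Injective b)
    (ha_fin : (Set.range (displacement a)).Finite) (hb_fin : (Set.range (displacement b)).Finite)
    (hab : IsCompl (Set.range a) (Set.range b)) : IsParadoxicalGroup G := by
  obtain ⟨n, X, g, hX_disj, hX, hXg, hXg_disj⟩ :=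
    exists_pieces_of_finite_range_displacement ha ha_fin
  obtain ⟨m, Y, h, hY_disj, hY, hYh, hYh_disj⟩ :=
    exists_pieces_of_finite_range_displacement hb hb_fin
  refine ⟨n, m, X, Y, g, h, hX_disj, hY_disj, fun i j => ?_, ?_, hXg, hYh, hXg_disj, hYh_disj⟩
  · exact hab.disjoint.mono (hX ▸ Set.subset_iUnion X i) (hY ▸ Set.subset_iUnion Y j)
  · rw [hX, hY]
    exact hab.sup_eq_top

end Displacement

/-- If a group does not satisfy the Følner condition, then it is paradoxical. -/
theorem paradoxical_of_not_folnerCondition {G : Type*} [Group G]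
    (h : ¬ FolnerCondition G) : IsParadoxicalGroup G := by
  obtain ⟨T, h_one, hT⟩ := exists_isExpanding_of_not_folnerCondition h (Fintype.card Bool)
  obtain ⟨f, hf, hfT⟩ := hT.exists_bijective_displacement_mem h_one
  have h_inj (b : Bool) : Injective fun x => f (x, b) :=
    hf.injective.comp (Prod.mk_left_injective b)
  have h_fin (b : Bool) : (Set.range (displacement fun x => f (x, b))).Finite :=
    T.finite_toSet.subset (Set.range_subset_iff.2 (hfT b))
  exact isParadoxicalGroup_of_isCompl_range (h_inj false) (h_inj true) (h_fin false) (h_fin true)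
    (isCompl_range_of_bijective_prod_bool hf)
end
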